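/- arXiv:1909.06958 — 2 statements merged into one kernel-verified Lean document; each statement's English description precedes it below -/
import Mathlib

section
/- Let G be a connected unicyclic nonbipartite graph, so its unique cycle C is odd of length 2k+1, and let I = I(G) be its edge ideal. Then for every integer m ≥ 1: if m < d_G then (Iᵐ : 𝔪) = Iᵐ, and if m ≥ d_G then (Iᵐ : 𝔪) = Iᵐ + u_G·I^{m−d_G} (with I⁰ = S). This is the ideal-theoretic content of Theorem: Soc(I(G)) is a free module of rank 1 over the fiber cone, generated by the class of u_G in degree d_G − 1. -/
open MvPolynomial

/-- The monomial `X i * X j` attached to an edge of a graph. -/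
noncomputable def edgeMon {n : ℕ} (K : Type*) [Field K] :
    Sym2 (Fin n) → MvPolynomial (Fin n) K :=
  Sym2.lift ⟨fun i j => X i * X j, fun _ _ => mul_comm _ _⟩

/-- An edge is a leaf if one of its endpoints is adjacent to exactly one vertex. -/
def IsLeafEdge {n : ℕ} (G : SimpleGraph (Fin n)) (e : Sym2 (Fin n)) : Prop :=
  ∃ x, x ∈ e ∧ ∃! y, G.Adj x y

/-!
A monomial lies in `I(G)ᵐ` exactly when its exponent vector dominates a sum of `m` edge vectors
`e_x + e_y`, so the theorem is about which `a` satisfy this after adding any one unit vector.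

* If the only cycle is odd, the edge vectors form a basis of the lattice of vectors of even degree.
  The coefficient of an edge in this basis is given by a linear form `φ`, whose least value at a
  vertex is `-1/2` for an edge of the cycle, `0` for a leaf and `-1` for the other edges. All
  `a + e_w` are sums of edges exactly when `a` has odd degree and `φ a ≥ -min φ` for every edge. The
  exponent vector `u` of `u_G` satisfies `φ u = -min φ` for every edge, so these `a` are the vectors
  `u + z` with `z` a sum of edges.
* If all `a + e_w` dominate a sum of `m` edges but `a` does not, then `a` has degree `2m - 1`, so
  that `a + e_w` is equal to a sum of `m` edges: deleting an edge of the cycle leaves a bipartite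
  graph, where a vertex-weighted form of Kőnig's theorem provides covers whose weight bounds the
  degree.
-/

section EdgeMonoid

variable {V : Type*} {G H : SimpleGraph V}

/-- The exponent vector of the monomial of an edge. -/
noncomputable def edgeVec : Sym2 V → V →₀ ℕ :=
  Sym2.lift ⟨fun x y => Finsupp.single x 1 + Finsupp.single y 1, fun _ _ => add_comm _ _⟩

theorem edgeVec_mk (x y : V) : edgeVec s(x, y) = Finsupp.single x 1 + Finsupp.single y 1 :=
  rfl

@[simp]
theorem degree_edgeVec (e : Sym2 V) : (edgeVec e).degree = 2 := by
  induction e with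
  | h x y => simp [edgeVec_mk, Finsupp.degree_single]

theorem nsmul_edgeVec_le {x y : V} {b : V →₀ ℕ} {j : ℕ} (hxy : x ≠ y) (hx : j ≤ b x)
    (hy : j ≤ b y) : j • edgeVec s(x, y) ≤ b := by
  classical
  intro z
  simp only [edgeVec_mk, Finsupp.smul_apply, Finsupp.add_apply, Finsupp.single_apply, smul_eq_mul]
  grind

@[simp]
theorem weight_edgeVec {M : Type*} [AddCommMonoid M] (φ : V → M) (x y : V) :
    Finsupp.weight φ (edgeVec s(x, y)) = φ x + φ y := by
  simp [edgeVec_mk, Finsupp.weight_single]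

/-- The exponent vectors of the monomials of the edge ring of `G`. A vector of degree `2 * m` in
it is the exponent vector of a product of `m` edges. -/
noncomputable def edgeMonoid (G : SimpleGraph V) : Submodule ℕ (V →₀ ℕ) :=
  Submodule.span ℕ (edgeVec '' G.edgeSet)

theorem edgeVec_mem_edgeMonoid {x y : V} (h : G.Adj x y) : edgeVec s(x, y) ∈ edgeMonoid G :=
  Submodule.subset_span ⟨s(x, y), h, rfl⟩

theorem edgeMonoid_mono (h : H ≤ G) : edgeMonoid H ≤ edgeMonoid G :=
  Submodule.span_mono (Set.image_mono (SimpleGraph.edgeSet_mono h))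

theorem eq_zero_or_exists_eq_add_edgeVec {z : V →₀ ℕ} (hz : z ∈ edgeMonoid G) :
    z = 0 ∨ ∃ w ∈ edgeMonoid G, ∃ e ∈ G.edgeSet, z = w + edgeVec e := by
  rw [edgeMonoid, ← Submodule.mem_toAddSubmonoid, Submodule.span_nat_eq_addSubmonoidClosure] at hz
  induction hz using AddSubmonoid.closure_induction_right with
  | zero => exact Or.inl rfl
  | add_right w hw y hy _ =>
    obtain ⟨e, he, rfl⟩ := hy
    exact Or.inr ⟨w, AddSubmonoid.closure_le.mpr Submodule.subset_span hw, e, he, rfl⟩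

theorem even_degree_of_mem_edgeMonoid {z : V →₀ ℕ} (hz : z ∈ edgeMonoid G) : Even z.degree := by
  induction hz using Submodule.span_induction with
  | mem z hz =>
    obtain ⟨e, -, rfl⟩ := hz
    simp
  | zero => simp
  | add z w _ _ hz hw => simpa using hz.add hw
  | smul r z _ hz => simpa using hz.mul_left r

theorem degree_nsmul_le_two_nsmul_weight {M : Type*} [AddCommMonoid M] [PartialOrder M]
    [IsOrderedAddMonoid M] {φ : V → M} {t : M} (hφ : ∀ ⦃x y⦄, G.Adj x y → t ≤ φ x + φ y)
    {z : V →₀ ℕ} (hz : z ∈ edgeMonoid G) : z.degree • t ≤ 2 • Finsupp.weight φ z := by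
  induction hz using Submodule.span_induction with
  | mem z hz =>
    obtain ⟨⟨x, y⟩, hxy, rfl⟩ := hz
    simpa using nsmul_le_nsmul_right (hφ hxy) 2
  | zero => simp
  | add z w _ _ hz hw => simpa [add_smul, smul_add] using add_le_add hz hw
  | smul r z _ hz =>
    simpa [mul_smul, smul_comm r 2] using nsmul_le_nsmul_right hz r

end EdgeMonoid

section BMatching

variable {V : Type*} {G H : SimpleGraph V} {a b : V →₀ ℕ} {m : ℕ}

/-- `G` has a `b`-matching with `m` edges (repetitions allowed): a product of `m` edge monomials
divides the monomial with exponent vector `b`. -/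
def HasBMatching (G : SimpleGraph V) (b : V →₀ ℕ) (m : ℕ) : Prop :=
  ∃ z ∈ edgeMonoid G, z.degree = 2 * m ∧ z ≤ b

theorem HasBMatching.mono_left (h : H ≤ G) (hb : HasBMatching H b m) : HasBMatching G b m :=
  let ⟨z, hz, hdeg, hle⟩ := hb
  ⟨z, edgeMonoid_mono h hz, hdeg, hle⟩

theorem HasBMatching.mono_right (h : a ≤ b) (ha : HasBMatching G a m) : HasBMatching G b m :=
  let ⟨z, hz, hdeg, hle⟩ := ha
  ⟨z, hz, hdeg, hle.trans h⟩

theorem HasBMatching.add_nsmul_edgeVec {x y : V} (hb : HasBMatching G b m) (h : G.Adj x y)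
    (j : ℕ) : HasBMatching G (b + j • edgeVec s(x, y)) (m + j) := by
  obtain ⟨z, hz, hdeg, hle⟩ := hb
  refine ⟨z + j • edgeVec s(x, y),
    add_mem hz (Submodule.smul_mem _ j (edgeVec_mem_edgeMonoid h)), ?_, by gcongr⟩
  rw [map_add, map_nsmul, degree_edgeVec, hdeg, smul_eq_mul]
  ring

theorem HasBMatching.two_mul_le_weight (hb : HasBMatching G b m) {y : V → ℕ}
    (hy : ∀ ⦃i j⦄, G.Adj i j → 2 ≤ y i + y j) : 2 * m ≤ Finsupp.weight y b := by
  obtain ⟨z, hz, hdeg, hle⟩ := hb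
  have hzy := degree_nsmul_le_two_nsmul_weight hy hz
  obtain ⟨w, rfl⟩ := exists_add_of_le hle
  rw [map_add]
  simp only [smul_eq_mul, hdeg] at hzy
  omega

end BMatching

section Uncross

open Finset

variable {V : Type*} [DecidableEq V] {G H : SimpleGraph V} {b : V →₀ ℕ}

theorem sum_nsmul_edgeVec_apply (S : Finset V) (j : ℕ) (x y : V) :
    ∑ z ∈ S, (j • edgeVec s(x, y)) z = (if x ∈ S then j else 0) + (if y ∈ S then j else 0) := by
  simp [edgeVec_mk, Finsupp.single_apply, sum_add_distrib]

theorem weight_indicator_eq_sum (S : Finset V) (b : V →₀ ℕ) :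
    Finsupp.weight (fun x => if x ∈ S then 1 else 0) b = ∑ x ∈ S, b x := by
  simp only [Finsupp.weight_apply, Finsupp.sum, smul_eq_mul, mul_ite, mul_one, mul_zero,
    ← Finset.sum_filter]
  refine sum_subset (fun x hx => (mem_filter.mp hx).2) fun x hxS hx => ?_
  simpa [hxS] using hx

/-- The result of uncrossing two vertex covers `S`, `T` of a graph with `2`-colouring `col`: their
union on the side `col = true`, their intersection on the other side. -/
def uncross (col : V → Bool) (S T : Finset V) : Finset V :=
  {x ∈ S ∪ T | col x} ∪ S ∩ T

theorem mem_uncross {col : V → Bool} {S T : Finset V} {x : V} :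
    x ∈ uncross col S T ↔ (x ∈ S ∨ x ∈ T) ∧ col x ∨ x ∈ S ∧ x ∈ T := by
  simp [uncross]

theorem isVertexCover_uncross {col : V → Bool} (hcol : ∀ ⦃x y⦄, H.Adj x y → col x ≠ col y)
    {S T : Finset V} (hS : H.IsVertexCover S) (hT : H.IsVertexCover T) :
    H.IsVertexCover (uncross col S T) := by
  intro x y hxy
  have hSxy := hS hxy
  have hTxy := hT hxy
  have := hcol hxy
  simp only [mem_coe, mem_uncross] at *
  grind

theorem sum_uncross_add_sum_uncross_not (col : V → Bool) (S T : Finset V) (f : V → ℕ) :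
    ∑ x ∈ uncross col S T, f x + ∑ x ∈ uncross (fun x => !col x) S T, f x
      = ∑ x ∈ S, f x + ∑ x ∈ T, f x := by
  have hunion : uncross col S T ∪ uncross (fun x => !col x) S T = S ∪ T := by
    ext x
    simp only [mem_union, mem_uncross]
    grind
  have hinter : uncross col S T ∩ uncross (fun x => !col x) S T = S ∩ T := by
    ext x
    simp only [mem_inter, mem_uncross]
    grind
  rw [← sum_union_inter, hunion, hinter, sum_union_inter]

theorem two_mul_le_sum_add_sum {x₀ y₀ : V} {m : ℕ}
    (hcov : ∀ y : V → ℕ, (∀ ⦃i j⦄, G.Adj i j → 2 ≤ y i + y j) → 2 * m ≤ Finsupp.weight y b)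
    {S T : Finset V} (hS : (G.deleteEdges {s(x₀, y₀)}).IsVertexCover (S : Set V))
    (hT : (G.deleteEdges {s(x₀, y₀)}).IsVertexCover (T : Set V))
    (h₀ : 2 ≤ ((if x₀ ∈ S then 1 else 0) + if x₀ ∈ T then 1 else 0) +
      ((if y₀ ∈ S then 1 else 0) + if y₀ ∈ T then 1 else 0)) :
    2 * m ≤ ∑ x ∈ S, b x + ∑ x ∈ T, b x := by
  have hST := hcov (fun x => (if x ∈ S then 1 else 0) + if x ∈ T then 1 else 0) fun i j hij => by
    have hSij := @hS i j
    have hTij := @hT i j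
    simp only [SimpleGraph.deleteEdges_adj, hij, Set.mem_singleton_iff, Sym2.eq_iff, mem_coe]
      at hSij hTij
    grind
  rw [← weight_indicator_eq_sum, ← weight_indicator_eq_sum]
  refine hST.trans_eq ?_
  simp [Finsupp.weight_apply, Finsupp.sum, mul_add, sum_add_distrib]

end Uncross

section Konig

open Finset

variable {V : Type*} [Finite V] {G H : SimpleGraph V} {b : V →₀ ℕ}

theorem exists_adj_ne_zero {N : ℕ}
    (hcov : ∀ S : Finset V, H.IsVertexCover S → N < ∑ x ∈ S, b x) :
    ∃ x y, H.Adj x y ∧ b x ≠ 0 ∧ b y ≠ 0 := by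
  cases nonempty_fintype V
  by_contra! h
  have hZ := hcov {x | b x = 0} fun x y hxy => by
    have := h x y hxy
    simp only [coe_filter, mem_univ, true_and, Set.mem_ofPred_eq]
    tauto
  rw [sum_eq_zero (by simp)] at hZ
  exact absurd hZ (Nat.not_lt_zero _)

theorem exists_adj_notMem_ne_zero {N : ℕ}
    (hcov : ∀ S : Finset V, H.IsVertexCover S → N < ∑ x ∈ S, b x) {M : Finset V}
    (hM : H.IsVertexCover M) (hN : ∑ x ∈ M, b x ≤ N + 1) {y : V} (hy : y ∈ M) (hby : b y ≠ 0) :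
    ∃ x, H.Adj x y ∧ x ∉ M ∧ b x ≠ 0 := by
  classical
  cases nonempty_fintype V
  by_contra! h
  have hcover : H.IsVertexCover (M.erase y ∪ ({x | b x = 0} : Finset V) : Finset V) := by
    intro p q hpq
    have := hM hpq
    have := hpq.ne
    have := h p
    have := h q
    have := hpq.symm
    simp only [mem_coe, mem_union, mem_erase, mem_filter, mem_univ, true_and] at *
    grind
  have hlt := (hcov _ hcover).trans_le (sum_union_inter (f := b) ▸ Nat.le_add_right _ _)
  rw [sum_eq_zero (s := {x | b x = 0}) (by simp)] at hlt
  have := add_sum_erase M b hy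
  omega

/-- Among the covers of least weight containing a vertex `y` of positive weight on the false side,
one with as much weight as possible on the true side cannot be uncrossed with a cover of least
weight through an edge `xy` that leaves it. -/
theorem exists_adj_forall_isVertexCover_lt (col : H.Coloring Bool) {N : ℕ}
    (hcov : ∀ S : Finset V, H.IsVertexCover S → N < ∑ x ∈ S, b x) :
    ∃ x y, H.Adj x y ∧ b x ≠ 0 ∧ b y ≠ 0 ∧
      ∀ S : Finset V, H.IsVertexCover S → x ∈ S → y ∈ S → N + 1 < ∑ x ∈ S, b x := by
  classical
  cases nonempty_fintype V
  by_contra! hno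
  let tight : Finset (Finset V) := {S | H.IsVertexCover (S : Set V) ∧ ∑ x ∈ S, b x ≤ N + 1 ∧
    ∃ y ∈ S, col y = false ∧ b y ≠ 0}
  have htight : tight.Nonempty := by
    obtain ⟨x, y, hxy, hx, hy⟩ := exists_adj_ne_zero hcov
    obtain ⟨S, hS, hxS, hyS, hle⟩ := hno x y hxy hx hy
    have hS' : ∀ z, (z ∈ S ∧ col z = false ∧ b z ≠ 0) → S ∈ tight := fun z hz =>
      (mem_filter_univ S).mpr ⟨hS, hle, z, hz⟩
    cases hcx : col x with
    | false => exact ⟨S, hS' x ⟨hxS, hcx, hx⟩⟩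
    | true => exact ⟨S, hS' y ⟨hyS, by simpa [hcx] using (col.valid hxy).symm, hy⟩⟩
  obtain ⟨M, hMt, hmax⟩ := exists_max_image tight (fun S => ∑ x ∈ S with col x, b x) htight
  obtain ⟨hM, hMle, y, hyM, hcy, hby⟩ := (mem_filter_univ M).mp hMt
  obtain ⟨x, hxy, hxM, hbx⟩ := exists_adj_notMem_ne_zero hcov hM hMle hyM hby
  obtain ⟨S, hS, hxS, hyS, hSle⟩ := hno x y hxy hbx hby
  have hcx : col x = true := by simpa [hcy] using col.valid hxy
  have hU' := hcov _ (isVertexCover_uncross (col := fun z => !col z)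
    (fun _ _ h => by simpa using col.valid h) hS hM)
  have hsum := sum_uncross_add_sum_uncross_not col S M b
  have hUt : uncross col S M ∈ tight :=
    (mem_filter_univ _).mpr ⟨isVertexCover_uncross (fun _ _ h => col.valid h) hS hM, by omega, y,
      mem_uncross.mpr (.inr ⟨hyS, hyM⟩), hcy, hby⟩
  refine (hmax _ hUt).not_gt (sum_lt_sum_of_subset (i := x) (fun z => ?_) ?_ ?_ ?_ ?_)
  · simp only [mem_filter, mem_uncross]
    tauto
  · simp [mem_uncross, hxS, hcx]
  · simp [hxM]
  · exact Nat.pos_of_ne_zero hbx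
  · exact fun _ _ _ => Nat.zero_le _

/-- König's theorem with vertex weights. -/
theorem hasBMatching_of_forall_isVertexCover_le (col : H.Coloring Bool) {N : ℕ}
    (hcov : ∀ S : Finset V, H.IsVertexCover S → N ≤ ∑ x ∈ S, b x) : HasBMatching H b N := by
  classical
  induction N generalizing b with
  | zero => exact ⟨0, zero_mem _, by simp, zero_le⟩
  | succ N ih =>
    obtain ⟨x, y, hxy, hx, hy, hlt⟩ := exists_adj_forall_isVertexCover_lt col hcov
    obtain ⟨b, rfl⟩ := exists_add_of_le
      (nsmul_edgeVec_le hxy.ne (Nat.one_le_iff_ne_zero.mpr hx) (Nat.one_le_iff_ne_zero.mpr hy))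
    rw [add_comm]
    refine (ih fun S hS => ?_).add_nsmul_edgeVec hxy 1
    have hcovS := hcov S hS
    have hltS := hlt S hS
    simp only [Finsupp.add_apply, sum_add_distrib, sum_nsmul_edgeVec_apply] at hcovS hltS
    grind

theorem exists_isVertexCover_deleteEdges_forall_sum_le (G : SimpleGraph V) (x₀ y₀ : V)
    (b : V →₀ ℕ) : ∃ S₀ : Finset V,
      ((G.deleteEdges {s(x₀, y₀)}).IsVertexCover (S₀ : Set V) ∧ x₀ ∉ S₀ ∧ y₀ ∉ S₀) ∧
      ∀ S : Finset V, (G.deleteEdges {s(x₀, y₀)}).IsVertexCover (S : Set V) → x₀ ∉ S → y₀ ∉ S →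
        ∑ x ∈ S₀, b x ≤ ∑ x ∈ S, b x := by
  classical
  cases nonempty_fintype V
  let covers : Finset (Finset V) :=
    {S | (G.deleteEdges {s(x₀, y₀)}).IsVertexCover (S : Set V) ∧ x₀ ∉ S ∧ y₀ ∉ S}
  have hcovers : covers.Nonempty := by
    refine ⟨{x₀, y₀}ᶜ, (mem_filter_univ _).mpr ⟨fun i j hij => ?_, by simp, by simp⟩⟩
    have := hij.ne
    simp only [SimpleGraph.deleteEdges_adj, Set.mem_singleton_iff, Sym2.eq_iff, mem_coe,
      mem_compl, mem_insert, mem_singleton] at *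
    grind
  obtain ⟨S₀, hS₀, hmin⟩ := exists_min_image covers (fun S => ∑ x ∈ S, b x) hcovers
  exact ⟨S₀, (mem_filter_univ S₀).mp hS₀, fun S hS hx hy =>
    hmin S ((mem_filter_univ S).mpr ⟨hS, hx, hy⟩)⟩

/-- The vertex covers of the bipartite graph `G - x₀y₀` meeting `{x₀, y₀}` cover `G`. The others
are made up for by repeating the edge `x₀y₀`. -/
theorem hasBMatching_of_forall_two_mul_le_weight {x₀ y₀ : V} (h₀ : G.Adj x₀ y₀)
    (col : (G.deleteEdges {s(x₀, y₀)}).Coloring Bool) {m : ℕ}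
    (hcov : ∀ y : V → ℕ, (∀ ⦃i j⦄, G.Adj i j → 2 ≤ y i + y j) → 2 * m ≤ Finsupp.weight y b) :
    HasBMatching G b m := by
  classical
  obtain ⟨S₀, ⟨hS₀, hx₀, hy₀⟩, hmin⟩ := exists_isVertexCover_deleteEdges_forall_sum_le G x₀ y₀ b
  set j := m - ∑ x ∈ S₀, b x
  have hend : ∀ z ∈ ({x₀, y₀} : Finset V), j ≤ b z := fun z hz => by
    have hzS₀ : z ∉ S₀ := by grind
    have hcover := hS₀.subset (coe_subset.mpr (subset_insert z S₀))
    have := two_mul_le_sum_add_sum hcov hcover hcover (by grind)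
    rw [sum_insert hzS₀] at this
    omega
  obtain ⟨b', hb'⟩ := exists_add_of_le
    (nsmul_edgeVec_le h₀.ne (hend x₀ (by simp)) (hend y₀ (by simp)))
  have hsum : ∀ S : Finset V, ∑ x ∈ S, b x =
      (if x₀ ∈ S then j else 0) + (if y₀ ∈ S then j else 0) + ∑ x ∈ S, b' x := fun S => by
    simp only [hb', Finsupp.add_apply, sum_add_distrib, sum_nsmul_edgeVec_apply]
  rw [hb', add_comm, show m = (m - j) + j by omega]
  refine HasBMatching.add_nsmul_edgeVec (.mono_left (G.deleteEdges_le _)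
    (hasBMatching_of_forall_isVertexCover_le col fun S hS => ?_)) h₀ j
  have hmeet := fun h => two_mul_le_sum_add_sum hcov hS hS h
  have hcontain := fun h => two_mul_le_sum_add_sum hcov hS₀ hS h
  have havoid := hmin S hS
  have := hsum S
  grind

/-- A `2`-cover that vanishes at a vertex has the same weight after raising `b` there; one that does
not vanish has weight at least the degree of `b`. -/
theorem hasBMatching_or_degree_lt {x₀ y₀ : V} (h₀ : G.Adj x₀ y₀)
    (col : (G.deleteEdges {s(x₀, y₀)}).Coloring Bool) {m : ℕ}
    (hb : ∀ x, HasBMatching G (b + Finsupp.single x 1) m) :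
    HasBMatching G b m ∨ b.degree < 2 * m := by
  refine or_iff_not_imp_right.mpr fun hdeg =>
    hasBMatching_of_forall_two_mul_le_weight h₀ col fun y hy => ?_
  by_cases h : ∃ x, y x = 0
  · obtain ⟨x, hx⟩ := h
    simpa [Finsupp.weight_single, hx] using (hb x).two_mul_le_weight hy
  · push Not at h
    refine (not_lt.mp hdeg).trans ?_
    rw [Finsupp.degree_apply, Finsupp.weight_apply]
    exact sum_le_sum fun x _ => Nat.le_mul_of_pos_right _ (Nat.pos_of_ne_zero (h x))

end Konig

section Lattice

variable {V : Type*} {G : SimpleGraph V}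

theorem eq_and_add_eq_zero_of_walk {Q : Type*} [AddCommMonoid Q] {f : V → Q}
    (hf : ∀ ⦃x y⦄, G.Adj x y → f x + f y = 0) {x y : V} (p : G.Walk x y) :
    (Even p.length → f x = f y) ∧ (Odd p.length → f x + f y = 0) := by
  induction p with
  | nil => simp
  | @cons x w y h p ih =>
    rw [SimpleGraph.Walk.length_cons, Nat.even_add_one, Nat.odd_add_one, Nat.not_even_iff_odd,
      Nat.not_odd_iff_even]
    refine ⟨fun hodd => ?_, fun heven => ih.1 heven ▸ hf h⟩
    calc f x = f x + (f w + f y) := by rw [ih.2 hodd, add_zero]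
      _ = f y := by rw [← add_assoc, hf h, zero_add]

theorem exists_walk_even_length (hconn : G.Connected) {v : V} {c : G.Walk v v}
    (hc : Odd c.length) (x y : V) : ∃ p : G.Walk x y, Even p.length := by
  obtain ⟨p⟩ := hconn.preconnected x v
  obtain ⟨q⟩ := hconn.preconnected v y
  by_cases h : Even (p.append q).length
  · exact ⟨_, h⟩
  · refine ⟨p.append (c.append q), ?_⟩
    simp only [SimpleGraph.Walk.length_append] at h ⊢
    grind

/-- The congruence on exponent vectors whose quotient is the cokernel of the inclusion of
`edgeMonoid G` in the category of commutative monoids. -/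
def edgeCon (G : SimpleGraph V) : AddCon (V →₀ ℕ) where
  r a b := ∃ p ∈ edgeMonoid G, ∃ q ∈ edgeMonoid G, a + p = b + q
  iseqv :=
    { refl := fun _ => ⟨0, zero_mem _, 0, zero_mem _, rfl⟩
      symm := fun ⟨p, hp, q, hq, h⟩ => ⟨q, hq, p, hp, h.symm⟩
      trans := fun ⟨p, hp, q, hq, h⟩ ⟨p', hp', q', hq', h'⟩ =>
        ⟨p + p', add_mem hp hp', q' + q, add_mem hq' hq, by
          rw [← add_assoc, h, add_right_comm, h', add_assoc]⟩ }
  add' := fun ⟨p, hp, q, hq, h⟩ ⟨p', hp', q', hq', h'⟩ =>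
    ⟨p + p', add_mem hp hp', q + q', add_mem hq hq', by
      rw [add_add_add_comm, h, h', add_add_add_comm]⟩

theorem edgeCon_edgeVec {x y : V} (h : G.Adj x y) : edgeCon G (edgeVec s(x, y)) 0 :=
  ⟨0, zero_mem _, _, edgeVec_mem_edgeMonoid h, add_comm _ _⟩

/-- An odd closed walk makes all unit vectors congruent to one another and of order two, so that
modulo edges only the parity of the degree survives. -/
theorem edgeCon_of_even_degree_add (hconn : G.Connected) {v : V} {c : G.Walk v v}
    (hc : Odd c.length) {a b : V →₀ ℕ} (hab : Even (a.degree + b.degree)) : edgeCon G a b := by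
  let f : V → (edgeCon G).Quotient := fun x => (edgeCon G).mk' (Finsupp.single x 1)
  have hf : ∀ ⦃x y⦄, G.Adj x y → f x + f y = 0 := fun x y h => by
    rw [← map_add, ← map_zero (edgeCon G).mk']
    exact (edgeCon G).eq.mpr (edgeCon_edgeVec h)
  have hconst : ∀ x, f x = f v := fun x =>
    let ⟨p, hp⟩ := exists_walk_even_length hconn hc x v
    (eq_and_add_eq_zero_of_walk hf p).1 hp
  have hmk : ∀ z : V →₀ ℕ, (edgeCon G).mk' z = z.degree • f v := fun z => by
    induction z using Finsupp.induction_linear with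
    | zero => simp
    | add z w hz hw => rw [map_add, map_add, add_smul, hz, hw]
    | single x n =>
      rw [← mul_one n, ← smul_eq_mul, ← Finsupp.smul_single, map_nsmul, map_nsmul,
        Finsupp.degree_single, smul_eq_mul, mul_one]
      exact congrArg (n • ·) (hconst x)
  have heven : ∀ n : ℕ, Even n → n • f v = 0 := fun n ⟨k, hk⟩ => by
    rw [hk, ← two_mul, mul_comm, mul_smul, two_smul,
      (eq_and_add_eq_zero_of_walk hf c).2 hc, smul_zero]
  refine (edgeCon G).eq.mp ?_
  calc (edgeCon G).mk' a = a.degree • f v + (b.degree + b.degree) • f v := by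
        rw [hmk, heven _ ⟨_, rfl⟩, add_zero]
    _ = (a.degree + b.degree) • f v + b.degree • f v := by rw [← add_smul, ← add_smul, add_assoc]
    _ = (edgeCon G).mk' b := by rw [heven _ hab, zero_add, hmk]

end Lattice

section EdgeCoord

variable {V : Type*} {G : SimpleGraph V} {e : Sym2 V} {φ : V → ℚ} {a u z : V →₀ ℕ}

open Classical in
/-- The linear form `Finsupp.weight φ` reads off the coefficient of `edgeVec e` in a combination of
the vectors of the edges of `G`. -/
def IsEdgeCoord (G : SimpleGraph V) (e : Sym2 V) (φ : V → ℚ) : Prop :=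
  ∀ ⦃x y⦄, G.Adj x y → φ x + φ y = if s(x, y) = e then 1 else 0

open Classical in
theorem IsEdgeCoord.weight_edgeVec (hφ : IsEdgeCoord G e φ) {e' : Sym2 V} (he' : e' ∈ G.edgeSet) :
    Finsupp.weight φ (edgeVec e') = if e' = e then 1 else 0 := by
  induction e' with
  | h x y => rw [_root_.weight_edgeVec, hφ he']

open Classical in
theorem IsEdgeCoord.weight_sum_edgeVec (hφ : IsEdgeCoord G e φ) {s : Finset (Sym2 V)}
    (hs : ∀ e' ∈ s, e' ∈ G.edgeSet) :
    Finsupp.weight φ (∑ e' ∈ s, edgeVec e') = if e ∈ s then 1 else 0 := by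
  rw [map_sum, Finset.sum_congr rfl fun e' he' => hφ.weight_edgeVec (hs e' he'),
    Finset.sum_ite_eq' s e]

theorem IsEdgeCoord.weight_linearCombination (hφ : IsEdgeCoord G e φ) {f : Sym2 V →₀ ℕ}
    (hf : f ∈ Finsupp.supported ℕ ℕ G.edgeSet) :
    Finsupp.weight φ (Finsupp.linearCombination ℕ edgeVec f) = f e := by
  classical
  rw [Finsupp.linearCombination_apply, Finsupp.sum, map_sum,
    Finset.sum_congr rfl fun e' he' => by rw [map_nsmul, hφ.weight_edgeVec (hf he')]]
  simp +contextual

theorem IsEdgeCoord.weight_nonneg (hφ : IsEdgeCoord G e φ) (hz : z ∈ edgeMonoid G) :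
    0 ≤ Finsupp.weight φ z := by
  have hadj : ∀ ⦃x y⦄, G.Adj x y → 0 ≤ φ x + φ y := fun x y h => by
    rw [hφ h]
    positivity
  simpa using degree_nsmul_le_two_nsmul_weight hadj hz

theorem exists_mem_edgeMonoid_eq_add (hau : edgeCon G a u)
    (hcoord : ∀ e ∈ G.edgeSet, ∃ φ, IsEdgeCoord G e φ ∧ Finsupp.weight φ u ≤ Finsupp.weight φ a) :
    ∃ z ∈ edgeMonoid G, a = u + z := by
  obtain ⟨p, hp, q, hq, hpq⟩ := hau
  obtain ⟨f, hf, rfl⟩ := (Finsupp.mem_span_image_iff_linearCombination ℕ).mp hp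
  obtain ⟨g, hg, rfl⟩ := (Finsupp.mem_span_image_iff_linearCombination ℕ).mp hq
  have hfg : f ≤ g := fun e => by
    by_cases he : e ∈ G.edgeSet
    · obtain ⟨φ, hφ, hle⟩ := hcoord e he
      have hwt := congrArg (Finsupp.weight φ) hpq
      rw [map_add, map_add, hφ.weight_linearCombination hf, hφ.weight_linearCombination hg] at hwt
      exact_mod_cast (by linarith : (f e : ℚ) ≤ g e)
    · rw [(Finsupp.mem_supported' ℕ f).mp hf e he]
      exact Nat.zero_le _
  obtain ⟨h, rfl⟩ := exists_add_of_le hfg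
  refine ⟨Finsupp.linearCombination ℕ edgeVec h,
    (Finsupp.mem_span_image_iff_linearCombination ℕ).mpr ⟨h, fun e he => hg ?_, rfl⟩, ?_⟩
  · simp_all
  · rw [map_add, add_left_comm, add_comm] at hpq
    exact add_left_cancel hpq

end EdgeCoord

section Unicyclic

variable {V : Type*} {G : SimpleGraph V} {e : Sym2 V} {v : V} {c : G.Walk v v}

/-- The closed walk `c` is a cycle of `G`, and every cycle of `G` has the same edges as `c`. -/
structure IsUniqueCycle (c : G.Walk v v) : Prop where
  isCycle : c.IsCycle
  mem_edges_iff : ∀ ⦃w⦄ (p : G.Walk w w), p.IsCycle → ∀ e, e ∈ p.edges ↔ e ∈ c.edges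

theorem IsUniqueCycle.isAcyclic_deleteEdges (hc : IsUniqueCycle c) (he : e ∈ c.edges) :
    (G.deleteEdges {e}).IsAcyclic := fun w p hp => by
  have hep : e ∈ p.edges := by
    rw [← SimpleGraph.Walk.edges_mapLe_eq_edges (G.deleteEdges_le {e})]
    exact (hc.mem_edges_iff _ (hp.mapLe _) e).mpr he
  simpa using p.edges_subset_edgeSet hep

theorem IsUniqueCycle.nonempty_coloring_deleteEdges (hc : IsUniqueCycle c) (he : e ∈ c.edges) :
    Nonempty ((G.deleteEdges {e}).Coloring Bool) :=
  ⟨(hc.isAcyclic_deleteEdges he).isBipartite.toColoring (by simp)⟩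

theorem coloring_deleteEdges_eq (hodd : Odd c.length) {x y : V}
    (col : (G.deleteEdges {s(x, y)}).Coloring Bool) : col x = col y := by
  by_contra hne
  have hcol : ∀ ⦃i j⦄, G.Adj i j → col i ≠ col j := fun i j hij => by
    by_cases h : s(i, j) = s(x, y)
    · rcases Sym2.eq_iff.mp h with ⟨rfl, rfl⟩ | ⟨rfl, rfl⟩
      exacts [hne, Ne.symm hne]
    · exact col.valid (by simpa [SimpleGraph.deleteEdges_adj, hij] using h)
  have := (SimpleGraph.Coloring.mk col fun h => hcol h).even_length_iff_congr c
  simp only [iff_self, iff_true] at this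
  exact Nat.not_even_iff_odd.mpr hodd this

theorem exists_mem_edges_ne (hc : c.IsCycle) (e : Sym2 V) : ∃ e' ∈ c.edges, e' ≠ e := by
  classical
  by_contra! h
  have hlen := List.nodup_iff_count_le_one.mp hc.edges_nodup e
  rw [List.count_eq_length.mpr fun e' he' => (h e' he').symm, c.length_edges] at hlen
  have := hc.three_le_length
  omega

theorem IsUniqueCycle.exists_isEdgeCoord_of_mem_edges (hc : IsUniqueCycle c)
    (hodd : Odd c.length) (he : e ∈ c.edges) :
    ∃ φ, IsEdgeCoord G e φ ∧ IsLeast (Set.range φ) (-(1 / 2)) := by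
  classical
  obtain ⟨col⟩ := hc.nonempty_coloring_deleteEdges he
  obtain ⟨x, y⟩ := e
  have hxy : col x = col y := coloring_deleteEdges_eq hodd col
  refine ⟨fun w => if col w = col x then 1 / 2 else -(1 / 2), fun i j hij => ?_, ?_, ?_⟩
  · by_cases h : s(i, j) = s(x, y)
    · rw [if_pos h]
      rcases Sym2.eq_iff.mp h with ⟨rfl, rfl⟩ | ⟨rfl, rfl⟩ <;> norm_num [hxy]
    · have hne : col i ≠ col j := col.valid (by simpa [SimpleGraph.deleteEdges_adj, hij] using h)
      rw [if_neg h]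
      cases hi : col i <;> cases hj : col j <;> cases hx : col x <;> simp_all
  · obtain ⟨⟨i, j⟩, hij, hne⟩ := exists_mem_edges_ne hc.isCycle s(x, y)
    have hadj : G.Adj i j := c.adj_of_mem_edges hij
    have hcol : col i ≠ col j := col.valid (by simpa [SimpleGraph.deleteEdges_adj, hadj] using hne)
    by_cases hi : col i = col x
    · exact ⟨j, if_neg (hi ▸ hcol.symm)⟩
    · exact ⟨i, if_neg hi⟩
  · rintro _ ⟨w, rfl⟩
    dsimp only
    split_ifs <;> norm_num

theorem exists_isEdgeCoord_of_leaf {x : V} (hx : x ∈ e) (he : e ∈ G.edgeSet)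
    (hleaf : ∃! y, G.Adj x y) : ∃ φ, IsEdgeCoord G e φ ∧ IsLeast (Set.range φ) 0 := by
  classical
  obtain ⟨y, rfl⟩ := hx
  have hxy : G.Adj x y := he
  refine ⟨Pi.single x 1, fun i j hij => ?_, ⟨y, by simp [hxy.ne']⟩, ?_⟩
  · have hi := fun h : i = x => hleaf.unique (h ▸ hij) hxy
    have hj := fun h : j = x => hleaf.unique (h ▸ hij.symm) hxy
    have := hij.ne
    simp only [Pi.single_apply, Sym2.eq_iff]
    grind
  · rintro _ ⟨w, rfl⟩
    by_cases h : w = x <;> simp [h]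

open Classical in
theorem isEdgeCoord_of_isBridge {s t : V} (hbridge : G.IsBridge s(s, t)) {col : V → Bool}
    (hcol : ∀ ⦃x y⦄, (G.deleteEdges {s(s, t)}).Reachable t x → (G.deleteEdges {s(s, t)}).Adj x y →
      col x ≠ col y) :
    IsEdgeCoord G s(s, t) fun x =>
      if (G.deleteEdges {s(s, t)}).Reachable t x then if col x = col t then 1 else -1 else 0 := by
  have hts : ¬(G.deleteEdges {s(s, t)}).Reachable t s := fun h =>
    SimpleGraph.isBridge_iff.mp hbridge h.symm
  intro x y hxy
  by_cases h : s(x, y) = s(s, t)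
  · rw [if_pos h]
    rcases Sym2.eq_iff.mp h with ⟨rfl, rfl⟩ | ⟨rfl, rfl⟩ <;> simp [hts]
  · have hadj : (G.deleteEdges {s(s, t)}).Adj x y := by
      simpa [SimpleGraph.deleteEdges_adj, hxy] using h
    have hiff : (G.deleteEdges {s(s, t)}).Reachable t x ↔ (G.deleteEdges {s(s, t)}).Reachable t y :=
      ⟨fun hx => hx.trans hadj.reachable, fun hy => hy.trans hadj.symm.reachable⟩
    dsimp only
    rw [if_neg h]
    by_cases hx : (G.deleteEdges {s(s, t)}).Reachable t x
    · have hne := hcol hx hadj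
      rw [if_pos hx, if_pos (hiff.mp hx)]
      cases hx : col x <;> cases hy : col y <;> cases ht : col t <;> simp_all
    · rw [if_neg hx, if_neg (mt hiff.mpr hx), add_zero]

theorem reachable_deleteEdges_of_mem_support (he : e ∉ c.edges) {x : V} (hx : x ∈ c.support) :
    (G.deleteEdges {e}).Reachable v x := by
  classical
  exact ((c.takeUntil x hx).toDeleteEdge e
    fun h => he (c.edges_takeUntil_subset_edges hx h)).reachable

theorem IsUniqueCycle.exists_isEdgeCoord_of_notMem_edges (hc : IsUniqueCycle c)
    (he : e ∈ G.edgeSet) (hec : e ∉ c.edges) (hleaf : ¬∃ x ∈ e, ∃! y, G.Adj x y) :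
    ∃ φ, IsEdgeCoord G e φ ∧ IsLeast (Set.range φ) (-1) := by
  classical
  have hbridge : G.IsBridge e := (SimpleGraph.isBridge_iff_forall_cycle_notMem he).mpr
    fun _ p hp => fun hep => hec ((hc.mem_edges_iff p hp e).mp hep)
  obtain ⟨s, t, rfl, hvt⟩ : ∃ s t, e = s(s, t) ∧ ¬(G.deleteEdges {e}).Reachable v t := by
    obtain ⟨s, t⟩ := e
    by_cases hvs : (G.deleteEdges {s(s, t)}).Reachable v s
    · exact ⟨s, t, rfl, fun hvt => SimpleGraph.isBridge_iff.mp hbridge (hvs.symm.trans hvt)⟩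
    · exact ⟨t, s, Sym2.eq_swap, hvs⟩
  obtain ⟨⟨x₀, y₀⟩, he₀, -⟩ := exists_mem_edges_ne hc.isCycle s(s, t)
  obtain ⟨col⟩ := hc.nonempty_coloring_deleteEdges he₀
  have hcol : ∀ ⦃x y⦄, (G.deleteEdges {s(s, t)}).Reachable t x →
      (G.deleteEdges {s(s, t)}).Adj x y → col x ≠ col y := fun x y htx hxy => by
    refine col.valid (SimpleGraph.deleteEdges_adj.mpr
      ⟨(G.deleteEdges_le _) hxy, fun h => hvt ?_⟩)
    have hxc : x ∈ c.support := c.fst_mem_support_of_mem_edges (h ▸ he₀)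
    exact (reachable_deleteEdges_of_mem_support hec hxc).trans htx.symm
  obtain ⟨y, hty, hys⟩ : ∃ y, G.Adj t y ∧ y ≠ s := by
    by_contra! h
    exact hleaf ⟨t, by simp, s, he.symm, h⟩
  have hty : (G.deleteEdges {s(s, t)}).Adj t y := by
    simp [SimpleGraph.deleteEdges_adj, hty, hys, hty.ne']
  refine ⟨_, isEdgeCoord_of_isBridge hbridge hcol, ⟨y, ?_⟩, ?_⟩
  · simp [hty.reachable, (hcol .rfl hty).symm]
  · rintro _ ⟨w, rfl⟩
    dsimp only
    split_ifs <;> norm_num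

end Unicyclic

section SocleExponent

variable {V : Type*} {G : SimpleGraph V} {e : Sym2 V}

theorem sum_map_edgeVec_edges_add_single {x y : V} (p : G.Walk x y) :
    (p.edges.map edgeVec).sum + Finsupp.single y 1 =
      2 • (p.support.tail.map fun w => Finsupp.single w 1).sum + Finsupp.single x 1 := by
  induction p with
  | nil => simp
  | @cons x w y h p ih =>
    rw [SimpleGraph.Walk.edges_cons, List.map_cons, List.sum_cons, add_assoc, ih,
      SimpleGraph.Walk.support_cons, List.tail_cons, ← p.cons_tail_support, List.map_cons,
      List.sum_cons, edgeVec_mk, p.cons_tail_support]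
    abel

variable [Finite V] {v : V} {c : G.Walk v v} {a : V →₀ ℕ} {m : ℕ}

/-- The set `E*(G)` of edges of `G` that are neither on the cycle `c` nor leaves. -/
noncomputable def innerEdges (c : G.Walk v v) : Finset (Sym2 V) :=
  (Set.toFinite {e | e ∈ G.edgeSet ∧ e ∉ c.edges ∧ ¬∃ x ∈ e, ∃! y, G.Adj x y}).toFinset

/-- The exponent vector of the monomial `u_G`, where `c` is the cycle of `G`. -/
noncomputable def socleExponent (c : G.Walk v v) : V →₀ ℕ :=
  (c.support.tail.map fun w => Finsupp.single w 1).sum + ∑ e ∈ innerEdges c, edgeVec e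

theorem mem_innerEdges :
    e ∈ innerEdges c ↔ e ∈ G.edgeSet ∧ e ∉ c.edges ∧ ¬∃ x ∈ e, ∃! y, G.Adj x y :=
  Set.Finite.mem_toFinset _

theorem degree_socleExponent (c : G.Walk v v) :
    (socleExponent c).degree = c.length + 2 * (innerEdges c).card := by
  have hdeg : ∀ l : List V, (l.map fun w => Finsupp.single w 1).sum.degree = l.length := fun l => by
    induction l with
    | nil => simp
    | cons w l ih => simp [ih, Finsupp.degree_single, add_comm]
  rw [socleExponent, map_add, hdeg, map_sum, Finset.sum_congr rfl fun e _ => degree_edgeVec e]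
  simp [mul_comm]

open Classical in
/-- The `1 / 2` is there because a cycle has each vertex on two edges: twice the sum of its vertices
is the sum of its edges. -/
theorem IsEdgeCoord.weight_socleExponent {φ : V → ℚ} (hφ : IsEdgeCoord G e φ) (hc : c.IsCycle) :
    Finsupp.weight φ (socleExponent c) =
      (if e ∈ c.edges then 1 / 2 else 0) + if e ∈ innerEdges c then 1 else 0 := by
  have hcycle := add_right_cancel (sum_map_edgeVec_edges_add_single c)
  rw [← List.sum_toFinset _ hc.edges_nodup] at hcycle
  have hwt := congrArg (Finsupp.weight φ) hcycle
  rw [hφ.weight_sum_edgeVec fun e' he' => c.edges_subset_edgeSet (List.mem_toFinset.mp he'),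
    map_nsmul, nsmul_eq_mul] at hwt
  simp only [List.mem_toFinset] at hwt
  rw [socleExponent, map_add, hφ.weight_sum_edgeVec fun e' he' => (mem_innerEdges.mp he').1]
  congr 1
  split_ifs at hwt ⊢ <;> push_cast at hwt <;> linarith

theorem IsUniqueCycle.exists_isEdgeCoord (hc : IsUniqueCycle c) (hodd : Odd c.length)
    (he : e ∈ G.edgeSet) :
    ∃ φ, IsEdgeCoord G e φ ∧
      IsLeast (Set.range φ) (-Finsupp.weight φ (socleExponent c)) := by
  by_cases hec : e ∈ c.edges
  · obtain ⟨φ, hφ, hleast⟩ := hc.exists_isEdgeCoord_of_mem_edges hodd hec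
    refine ⟨φ, hφ, ?_⟩
    simpa [hφ.weight_socleExponent hc.isCycle, hec, mem_innerEdges] using hleast
  · by_cases hleaf : ∃ x ∈ e, ∃! y, G.Adj x y
    · obtain ⟨x, hx, hxleaf⟩ := hleaf
      obtain ⟨φ, hφ, hleast⟩ := exists_isEdgeCoord_of_leaf hx he hxleaf
      have hinner : e ∉ innerEdges c := fun h => (mem_innerEdges.mp h).2.2 ⟨x, hx, hxleaf⟩
      refine ⟨φ, hφ, ?_⟩
      simpa [hφ.weight_socleExponent hc.isCycle, hec, hinner] using hleast
    · obtain ⟨φ, hφ, hleast⟩ := hc.exists_isEdgeCoord_of_notMem_edges he hec hleaf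
      have hinner : e ∈ innerEdges c := mem_innerEdges.mpr ⟨he, hec, hleaf⟩
      refine ⟨φ, hφ, ?_⟩
      simpa [hφ.weight_socleExponent hc.isCycle, hec, hinner] using hleast

theorem IsUniqueCycle.forall_add_single_mem_edgeMonoid_iff (hc : IsUniqueCycle c)
    (hconn : G.Connected) (hodd : Odd c.length) :
    (∀ w, a + Finsupp.single w 1 ∈ edgeMonoid G) ↔
      ∃ z ∈ edgeMonoid G, a = socleExponent c + z := by
  have hoddu : Odd (socleExponent c).degree := by
    rw [degree_socleExponent]
    exact hodd.add_even (even_two_mul _)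
  constructor
  · intro ha
    refine exists_mem_edgeMonoid_eq_add (edgeCon_of_even_degree_add hconn hodd ?_) fun e he => ?_
    · have heven := even_degree_of_mem_edgeMonoid (ha v)
      rw [map_add, Finsupp.degree_single] at heven
      exact (Nat.not_even_iff_odd.mp (Nat.even_add_one.mp heven)).add_odd hoddu
    · obtain ⟨φ, hφ, ⟨w, hw⟩, -⟩ := hc.exists_isEdgeCoord hodd he
      have hnonneg := hφ.weight_nonneg (ha w)
      rw [map_add, Finsupp.weight_single, one_smul, hw] at hnonneg
      exact ⟨φ, hφ, by linarith⟩
  · rintro ⟨z, hz, rfl⟩ w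
    suffices hw : socleExponent c + Finsupp.single w 1 ∈ edgeMonoid G by
      simpa only [add_right_comm] using add_mem hw hz
    have hcon : edgeCon G (socleExponent c + Finsupp.single w 1) 0 :=
      edgeCon_of_even_degree_add hconn hodd
        (by simpa [Finsupp.degree_single] using hoddu.add_one)
    obtain ⟨z', hz', heq⟩ := exists_mem_edgeMonoid_eq_add hcon fun e he => by
      obtain ⟨φ, hφ, -, hmin⟩ := hc.exists_isEdgeCoord hodd he
      refine ⟨φ, hφ, ?_⟩
      rw [map_zero, map_add, Finsupp.weight_single, one_smul]
      linarith [hmin ⟨w, rfl⟩]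
    rwa [heq, zero_add]

theorem IsUniqueCycle.forall_hasBMatching_add_single_iff (hc : IsUniqueCycle c)
    (hconn : G.Connected) (hodd : Odd c.length) :
    (∀ w, HasBMatching G (a + Finsupp.single w 1) m) ↔
      HasBMatching G a m ∨
        ∃ z ∈ edgeMonoid G, (socleExponent c + z).degree + 1 = 2 * m ∧ socleExponent c + z ≤ a := by
  constructor
  · intro ha
    obtain ⟨⟨x₀, y₀⟩, he₀, -⟩ := exists_mem_edges_ne hc.isCycle s(v, v)
    obtain ⟨col⟩ := hc.nonempty_coloring_deleteEdges he₀
    refine (hasBMatching_or_degree_lt (c.adj_of_mem_edges he₀) col ha).imp_right fun hlt => ?_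
    have hmem : ∀ w, (a + Finsupp.single w 1).degree = 2 * m ∧
        a + Finsupp.single w 1 ∈ edgeMonoid G := fun w => by
      obtain ⟨z, hz, hdeg, hle⟩ := ha w
      obtain ⟨r, hr⟩ := exists_add_of_le hle
      have hdegr := congrArg Finsupp.degree hr
      simp only [map_add, Finsupp.degree_single] at hdegr
      have hr0 : r = 0 := (Finsupp.degree_eq_zero_iff r).mp (by omega)
      rw [hr, hr0, add_zero]
      exact ⟨hdeg, hz⟩
    obtain ⟨z, hz, rfl⟩ :=
      (hc.forall_add_single_mem_edgeMonoid_iff hconn hodd).mp fun w => (hmem w).2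
    refine ⟨z, hz, ?_, le_rfl⟩
    simpa [Finsupp.degree_single] using (hmem v).1
  · rintro (ha | ⟨z, hz, hdeg, hle⟩) w
    · exact ha.mono_right le_self_add
    · refine ⟨_, (hc.forall_add_single_mem_edgeMonoid_iff hconn hodd).mpr ⟨z, hz, rfl⟩ w, ?_,
        add_le_add_left hle _⟩
      rw [map_add, Finsupp.degree_single, hdeg]

end SocleExponent

section EdgeIdeal

variable (R : Type*) [CommSemiring R] {V : Type*} (G : SimpleGraph V)

theorem prod_map_X_eq_monomial (l : List V) :
    (l.map X).prod = monomial (l.map fun w => Finsupp.single w 1).sum (1 : R) := by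
  induction l with
  | nil => simp
  | cons w l ih =>
    rw [List.map_cons, List.prod_cons, List.map_cons, List.sum_cons, ih, X, monomial_mul, one_mul]

theorem span_monomial_image_mul (s t : Set (V →₀ ℕ)) :
    Ideal.span ((fun a => monomial a (1 : R)) '' s) * Ideal.span ((fun a => monomial a 1) '' t) =
      Ideal.span ((fun a => monomial a 1) '' Set.image2 (· + ·) s t) := by
  rw [Ideal.span_mul_span', Set.image_image2, ← Set.image2_mul, Set.image2_image_left,
    Set.image2_image_right]
  simp only [monomial_mul, one_mul]

/-- The edge ideal `I(G)`. -/
noncomputable def edgeIdeal : Ideal (MvPolynomial V R) :=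
  Ideal.span {f | ∃ i j, G.Adj i j ∧ f = X i * X j}

theorem edgeIdeal_eq_span_monomial_image :
    edgeIdeal R G = Ideal.span ((fun a => monomial a 1) '' (edgeVec '' G.edgeSet)) := by
  rw [edgeIdeal]
  congr 1
  ext f
  simp [Sym2.exists, edgeVec_mk, X, monomial_mul, eq_comm]

theorem edgeIdeal_pow_eq_span_monomial_image (m : ℕ) :
    edgeIdeal R G ^ m =
      Ideal.span ((fun a => monomial a 1) '' {z ∈ edgeMonoid G | z.degree = 2 * m}) := by
  induction m with
  | zero =>
    rw [pow_zero, Ideal.one_eq_top, eq_comm, Ideal.eq_top_iff_one]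
    exact Ideal.subset_span ⟨0, by simp⟩
  | succ m ih =>
    rw [pow_succ, ih, edgeIdeal_eq_span_monomial_image, span_monomial_image_mul]
    congr 2
    ext z
    constructor
    · rintro ⟨w, ⟨hw, hdeg⟩, _, ⟨e, he, rfl⟩, rfl⟩
      refine ⟨add_mem hw (Submodule.subset_span ⟨e, he, rfl⟩), ?_⟩
      rw [map_add, degree_edgeVec, hdeg, mul_add_one]
    · rintro ⟨hz, hdeg⟩
      obtain rfl | ⟨w, hw, e, he, rfl⟩ := eq_zero_or_exists_eq_add_edgeVec hz
      · simp at hdeg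
      · rw [map_add, degree_edgeVec, mul_add_one, Nat.add_right_cancel_iff] at hdeg
        exact ⟨w, ⟨hw, hdeg⟩, _, ⟨e, he, rfl⟩, rfl⟩

variable {R G} {f : MvPolynomial V R} {m j : ℕ} {u : V →₀ ℕ}

theorem mem_edgeIdeal_pow_iff :
    f ∈ edgeIdeal R G ^ m ↔ ∀ a ∈ f.support, HasBMatching G a m := by
  rw [edgeIdeal_pow_eq_span_monomial_image, mem_ideal_span_monomial_image]
  simp [HasBMatching, and_assoc]

theorem mem_edgeIdeal_pow_colon_iff :
    f ∈ (edgeIdeal R G ^ m).colon (Ideal.span (Set.range (X : V → MvPolynomial V R))) ↔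
      ∀ a ∈ f.support, ∀ w, HasBMatching G (a + Finsupp.single w 1) m := by
  rw [Ideal.colon_span, Submodule.mem_colon]
  simp only [Set.forall_mem_range, smul_eq_mul, mem_edgeIdeal_pow_iff, support_mul_X,
    Finset.forall_mem_map, addRightEmbedding_apply]
  exact ⟨fun h a ha w => h w a ha, fun h w a ha => h a ha w⟩

theorem mem_edgeIdeal_pow_sup_iff :
    f ∈ edgeIdeal R G ^ m ⊔ Ideal.span {monomial u 1} * edgeIdeal R G ^ j ↔
      ∀ a ∈ f.support, HasBMatching G a m ∨
        ∃ z ∈ edgeMonoid G, z.degree = 2 * j ∧ u + z ≤ a := by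
  rw [edgeIdeal_pow_eq_span_monomial_image, edgeIdeal_pow_eq_span_monomial_image,
    ← Set.image_singleton (f := fun a => monomial a (1 : R)), span_monomial_image_mul,
    ← Ideal.span_union, ← Set.image_union, mem_ideal_span_monomial_image]
  simp [HasBMatching, or_and_right, exists_or, and_assoc]

end EdgeIdeal

section Socle

variable {V : Type*} {G : SimpleGraph V} {v : V}

theorem socle_of_unicyclic_nonbipartite_general (R : Type*) [CommSemiring R] [Finite V]
    (hconn : G.Connected) {c : G.Walk v v} (hc : IsUniqueCycle c) {k : ℕ}
    (hlen : c.length = 2 * k + 1) {d : ℕ} (hd : d = (innerEdges c).card + k + 1) (m : ℕ) :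
    (m < d → (edgeIdeal R G ^ m).colon (Ideal.span (Set.range (X : V → MvPolynomial V R))) =
      edgeIdeal R G ^ m) ∧
    (d ≤ m → (edgeIdeal R G ^ m).colon (Ideal.span (Set.range (X : V → MvPolynomial V R))) =
      edgeIdeal R G ^ m ⊔
        Ideal.span {monomial (socleExponent c) 1} * edgeIdeal R G ^ (m - d)) := by
  have hiff : ∀ a, (∀ w, HasBMatching G (a + Finsupp.single w 1) m) ↔ HasBMatching G a m ∨
      ∃ z ∈ edgeMonoid G, z.degree + 2 * d = 2 * m ∧ socleExponent c + z ≤ a := fun a => by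
    rw [hc.forall_hasBMatching_add_single_iff hconn ⟨k, hlen⟩]
    have hdeg : ∀ z, (socleExponent c + z).degree + 1 = z.degree + 2 * d := fun z => by
      rw [map_add, degree_socleExponent]
      omega
    simp only [hdeg]
  constructor
  · intro hm
    have hne : ∀ n, n + 2 * d ≠ 2 * m := by omega
    ext f
    simp only [mem_edgeIdeal_pow_colon_iff, mem_edgeIdeal_pow_iff, hiff, hne, false_and, and_false,
      exists_false, or_false]
  · intro hm
    have hsub : ∀ n, n + 2 * d = 2 * m ↔ n = 2 * (m - d) := by omega
    ext f
    simp only [mem_edgeIdeal_pow_colon_iff, mem_edgeIdeal_pow_sup_iff, hiff, hsub]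

end Socle

theorem edgeMon_eq_monomial {K : Type*} [Field K] {n : ℕ} (e : Sym2 (Fin n)) :
    edgeMon K e = monomial (edgeVec e) 1 := by
  induction e with
  | h x y => simp [edgeMon, edgeVec_mk, X, monomial_mul]

theorem prod_map_X_mul_finprod_edgeMon (K : Type*) [Field K] {n : ℕ} {G : SimpleGraph (Fin n)}
    {v : Fin n} (c : G.Walk v v) :
    (c.support.tail.map X).prod * ∏ᶠ e ∈ (innerEdges c : Set (Sym2 (Fin n))), edgeMon K e =
      monomial (socleExponent c) 1 := by
  rw [finprod_mem_coe_finset, prod_map_X_eq_monomial,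
    Finset.prod_congr rfl fun e _ => edgeMon_eq_monomial e, ← monomial_sum_one, monomial_mul,
    one_mul, socleExponent]

/-- For a connected unicyclic nonbipartite graph `G` with unique odd cycle of
length `2k+1`, the socle module of the edge ideal `I = I(G)` is free of rank one over the
fiber cone, generated by `u_G` in degree `d_G - 1`; ideal-theoretically:
`(Iᵐ : 𝔪) = Iᵐ` for `m < d_G` and `(Iᵐ : 𝔪) = Iᵐ + u_G·I^{m-d_G}` for `m ≥ d_G`. -/
theorem socle_of_unicyclic_nonbipartite
    {K : Type*} [Field K] {n : ℕ} (G : SimpleGraph (Fin n))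
    (hconn : G.Connected)
    (k : ℕ) (v : Fin n) (c : G.Walk v v) (hc : c.IsCycle) (hlen : c.length = 2 * k + 1)
    -- `c` is the unique cycle of `G`
    (huniq : ∀ (w : Fin n) (p : G.Walk w w), p.IsCycle → ∀ e, e ∈ p.edges ↔ e ∈ c.edges)
    (I : Ideal (MvPolynomial (Fin n) K))
    (hI : I = Ideal.span {f | ∃ i j, G.Adj i j ∧ f = X i * X j})
    (mI : Ideal (MvPolynomial (Fin n) K)) (hmI : mI = Ideal.span (Set.range X))
    -- `E*(G)`: edges not on the cycle and not leaves
    (Estar : Set (Sym2 (Fin n)))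
    (hEstar : Estar = {e | e ∈ G.edgeSet ∧ e ∉ c.edges ∧ ¬ IsLeafEdge G e})
    (dG : ℕ) (hdG : dG = Estar.ncard + k + 1)
    (uG : MvPolynomial (Fin n) K)
    (huG : uG = (c.support.tail.map X).prod * ∏ᶠ e ∈ Estar, edgeMon K e) :
    ∀ m : ℕ, 1 ≤ m →
      (m < dG → (I ^ m).colon mI = I ^ m) ∧
      (dG ≤ m → (I ^ m).colon mI = I ^ m ⊔ Ideal.span {uG} * I ^ (m - dG)) := by
  have hinner : Estar = innerEdges c := by
    rw [hEstar]
    ext e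
    exact mem_innerEdges.symm
  subst hI hmI hinner hdG huG
  rw [Set.ncard_coe_finset, prod_map_X_mul_finprod_edgeMon]
  exact fun m _ => socle_of_unicyclic_nonbipartite_general K hconn ⟨hc, huniq⟩ hlen rfl m
end

section
/- Let I be the basic PLP-polymatroidal ideal of type (0, b | α, β) in S = K[x₁,…,x_n]. Then there exists an integer m ≥ 1 with (Iᵐ : 𝔪) ≠ Iᵐ (equivalently, Soc*(I) ≠ 0, equivalently the analytic spread of I equals n) if and only if all of the following inequalities hold: b_i ≥ 1 for i = 1,…,n; α_i ≤ β_i − 1 for i = 2,…,n−1; and β_i + b_{i+1} + ⋯ + b_j > α_j for all 1 ≤ i < j ≤ n. -/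
open MvPolynomial

/-!
Powers of a monomial ideal correspond to iterated sumsets of its set `P` of generating exponents,
and a colon ideal `(J : 𝔪)` exceeds a monomial ideal `J` exactly when some monomial outside `J` is
sent into `J` by every variable.

Suppose that for every `i` there is a vector `g` with `g + e_i` and `g + e_{i+1}` both in `P`. Since
`v + (g + e_i) + e_{i+1} = (v + e_i) + (g + e_{i+1})`, if `v + e_t` lies in the `m`-fold sumset for
all `t ≤ i`, then `v + g + e_i` has the same property for the `(m + 1)`-fold sumset and all
`t ≤ i + 1`. At the last index this yields a socle element, as `P` lives in a single degree.

For a PLP ideal, vectors of prefix sums are lattice paths between `α` and `β` with increments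
bounded by `b`. The inequalities say that the lowest such path lies strictly below the highest one
at every position `p` before the last. Following the highest path, cut off at the height `h` of the
lowest path at `p`, and then the lowest path, raised to at least `h + 1`, one takes the
step from `h` to `h + 1` either at `p` or right after it; the two paths differ by such an exchange.

Conversely, a socle element excludes that a coordinate vanishes on `P` and, when `n ≥ 2`, that a
coordinate is constant on `P` or that `P` is a product of its restrictions to two blocks of
coordinates; each violated inequality forces one of these.
-/

section MonomialIdeals

open scoped Pointwise

/-- The `m`-fold sumset `P + ⋯ + P`. It is written as a sum because `m • P` could also denote the
dilation `{m • u | u ∈ P}`. -/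
def iteratedSumset {M : Type*} [AddCommMonoid M] (m : ℕ) (P : Set M) : Set M :=
  ∑ _k : Fin m, P

lemma mem_iteratedSumset {M : Type*} [AddCommMonoid M] {m : ℕ} {P : Set M} {w : M} :
    w ∈ iteratedSumset m P ↔ ∃ u : Fin m → M, (∀ k, u k ∈ P) ∧ ∑ k, u k = w := by
  simp only [iteratedSumset, Set.mem_fintype_sum, exists_prop]

lemma iteratedSumset_one {M : Type*} [AddCommMonoid M] (P : Set M) : iteratedSumset 1 P = P := by
  simp only [iteratedSumset, Fin.sum_univ_one]

lemma add_mem_iteratedSumset_succ {M : Type*} [AddCommMonoid M] {m : ℕ} {P : Set M} {w u : M}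
    (hw : w ∈ iteratedSumset m P) (hu : u ∈ P) : w + u ∈ iteratedSumset (m + 1) P := by
  rw [iteratedSumset, Fin.sum_univ_castSucc]
  exact Set.add_mem_add hw hu

lemma map_eq_nsmul_of_mem_iteratedSumset {M A : Type*} [AddCommMonoid M] [AddCommMonoid A]
    (φ : M →+ A) {P : Set M} {c : A} (hP : ∀ u ∈ P, φ u = c) {m : ℕ} {w : M}
    (hw : w ∈ iteratedSumset m P) : φ w = m • c := by
  obtain ⟨u, hu, rfl⟩ := mem_iteratedSumset.mp hw
  simp only [map_sum, hP _ (hu _), Finset.sum_const, Finset.card_univ, Fintype.card_fin]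

/-- The ideal generated by the monomials whose exponent vectors lie in `Q`. -/
noncomputable def monomialIdeal {σ : Type*} (R : Type*) [CommSemiring R] (Q : Set (σ →₀ ℕ)) :
    Ideal (MvPolynomial σ R) :=
  Ideal.span ((fun u ↦ monomial u 1) '' Q)

/-- `v` is the exponent vector of a monomial in `(J : 𝔪)` but not in `J`, where `J` is the monomial
ideal generated by the exponent vectors in `Q`. -/
def IsSocleExponent {σ : Type*} (Q : Set (σ →₀ ℕ)) (v : σ →₀ ℕ) : Prop :=
  (¬ ∃ w ∈ Q, w ≤ v) ∧ ∀ i, ∃ w ∈ Q, w ≤ v + Finsupp.single i 1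

variable {σ R : Type*} [CommSemiring R] {Q : Set (σ →₀ ℕ)}

lemma monomialIdeal_pow (Q : Set (σ →₀ ℕ)) (m : ℕ) :
    monomialIdeal R Q ^ m = monomialIdeal R (iteratedSumset m Q) := by
  have himage : ∏ _k : Fin m, (fun u ↦ monomial u (1 : R)) '' Q =
      (fun u ↦ monomial u 1) '' iteratedSumset m Q := by
    ext f
    simp only [Set.mem_fintype_prod, Set.mem_image, mem_iteratedSumset, exists_prop]
    constructor
    · rintro ⟨g, hg, rfl⟩
      choose u hu hug using hg
      exact ⟨_, ⟨u, hu, rfl⟩, by simp only [monomial_sum_one, hug]⟩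
    · rintro ⟨_, ⟨u, hu, rfl⟩, rfl⟩
      exact ⟨_, fun k ↦ ⟨u k, hu k, rfl⟩, (monomial_sum_one _ _).symm⟩
  rw [monomialIdeal, monomialIdeal, ← himage, ← Ideal.prod_span, Fin.prod_const]

lemma mem_monomialIdeal {f : MvPolynomial σ R} :
    f ∈ monomialIdeal R Q ↔ ∀ v ∈ f.support, ∃ w ∈ Q, w ≤ v :=
  mem_ideal_span_monomial_image

lemma monomial_mem_monomialIdeal [Nontrivial R] {v : σ →₀ ℕ} :
    monomial v 1 ∈ monomialIdeal R Q ↔ ∃ w ∈ Q, w ≤ v := by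
  classical
  simp [mem_monomialIdeal, support_monomial]

lemma mem_colon_span_X {J : Ideal (MvPolynomial σ R)} {f : MvPolynomial σ R} :
    f ∈ J.colon (Ideal.span (Set.range X) : Ideal (MvPolynomial σ R)) ↔ ∀ i, f * X i ∈ J := by
  simp only [Ideal.span, Submodule.colon_span, Submodule.mem_colon, Set.forall_mem_range,
    smul_eq_mul]

lemma colon_monomialIdeal_ne_iff [Nontrivial R] :
    (monomialIdeal R Q).colon (Ideal.span (Set.range X) : Ideal (MvPolynomial σ R)) ≠
        monomialIdeal R Q ↔
      ∃ v, IsSocleExponent Q v := by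
  constructor
  · intro hne
    obtain ⟨f, hf, hfQ⟩ := SetLike.exists_of_lt (lt_of_le_of_ne Ideal.le_colon hne.symm)
    rw [mem_monomialIdeal] at hfQ
    push Not at hfQ
    obtain ⟨v, hv, hvQ⟩ := hfQ
    refine ⟨v, fun ⟨w, hw, hwv⟩ ↦ hvQ w hw hwv, fun i ↦ ?_⟩
    refine mem_monomialIdeal.mp (mem_colon_span_X.mp hf i) _ ?_
    rwa [mem_support_iff, coeff_mul_X, ← mem_support_iff]
  · rintro ⟨v, hv, hvi⟩ heq
    refine hv (monomial_mem_monomialIdeal.mp (heq ▸ mem_colon_span_X.mpr fun i ↦ ?_ :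
      monomial v (1 : R) ∈ monomialIdeal R Q))
    rw [X, monomial_mul, one_mul]
    exact monomial_mem_monomialIdeal.mpr (hvi i)

lemma IsSocleExponent.exists_lt {v : σ →₀ ℕ} (h : IsSocleExponent Q v) (i : σ) :
    ∃ w ∈ Q, v i < w i ∧ ∀ k ≠ i, w k ≤ v k := by
  obtain ⟨w, hw, hwv⟩ := h.2 i
  have hoff : ∀ k ≠ i, w k ≤ v k := fun k hk ↦ by
    simpa [Finsupp.single_eq_of_ne hk] using hwv k
  refine ⟨w, hw, not_le.mp fun hi ↦ h.1 ⟨w, hw, fun k ↦ ?_⟩, hoff⟩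
  rcases eq_or_ne k i with rfl | hk
  exacts [hi, hoff k hk]

lemma isSocleExponent_of_degree_eq [Nonempty σ] {D : ℕ} (hQ : ∀ w ∈ Q, w.degree = D)
    {v : σ →₀ ℕ} (hv : ∀ i, v + Finsupp.single i 1 ∈ Q) : IsSocleExponent Q v := by
  refine ⟨fun ⟨w, hw, hwv⟩ ↦ ?_, fun i ↦ ⟨_, hv i, le_rfl⟩⟩
  have hdeg := hQ _ (hv (Classical.arbitrary σ))
  rw [map_add, Finsupp.degree_single, ← hQ w hw] at hdeg
  have := Finsupp.degree_mono hwv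
  omega

/-- The vector that agrees with `u` where `p` holds and with `u'` elsewhere. -/
noncomputable def splice (p : σ → Prop) [DecidablePred p] (u u' : σ →₀ ℕ) : σ →₀ ℕ :=
  u.filter p + u'.filter (¬ p ·)

lemma splice_apply (p : σ → Prop) [DecidablePred p] (u u' : σ →₀ ℕ) (k : σ) :
    splice p u u' k = if p k then u k else u' k := by
  by_cases hk : p k <;> simp [splice, hk]

lemma splice_mem_iteratedSumset {p : σ → Prop} [DecidablePred p] {P : Set (σ →₀ ℕ)}
    (hP : ∀ u ∈ P, ∀ u' ∈ P, splice p u u' ∈ P) {m : ℕ} {w w' : σ →₀ ℕ}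
    (hw : w ∈ iteratedSumset m P) (hw' : w' ∈ iteratedSumset m P) :
    splice p w w' ∈ iteratedSumset m P := by
  obtain ⟨u, hu, rfl⟩ := mem_iteratedSumset.mp hw
  obtain ⟨u', hu', rfl⟩ := mem_iteratedSumset.mp hw'
  refine mem_iteratedSumset.mpr ⟨fun k ↦ splice p (u k) (u' k), fun k ↦ hP _ (hu k) _ (hu' k), ?_⟩
  simp only [splice, Finset.sum_add_distrib, Finsupp.filter_sum]

lemma IsSocleExponent.exists_apply_ne [Nontrivial σ] {P : Set (σ →₀ ℕ)} {m : ℕ} {v : σ →₀ ℕ}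
    (h : IsSocleExponent (iteratedSumset m P) v) (i : σ) (c : ℕ) : ∃ u ∈ P, u i ≠ c := by
  by_contra! hc
  obtain ⟨k, hk⟩ := exists_ne i
  obtain ⟨w, hw, hwi, -⟩ := h.exists_lt i
  obtain ⟨w', hw', -, hw'i⟩ := h.exists_lt k
  have e := map_eq_nsmul_of_mem_iteratedSumset (Finsupp.applyAddHom i) hc hw
  have e' := map_eq_nsmul_of_mem_iteratedSumset (Finsupp.applyAddHom i) hc hw'
  have := hw'i i hk.symm
  simp only [Finsupp.applyAddHom_apply] at e e'
  omega

lemma IsSocleExponent.not_forall_splice_mem {P : Set (σ →₀ ℕ)} {m : ℕ} {v : σ →₀ ℕ}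
    (h : IsSocleExponent (iteratedSumset m P) v) {p : σ → Prop} [DecidablePred p] {i j : σ}
    (hi : p i) (hj : ¬ p j) : ¬ ∀ u ∈ P, ∀ u' ∈ P, splice p u u' ∈ P := by
  intro hP
  obtain ⟨w, hw, -, hwv⟩ := h.exists_lt j
  obtain ⟨w', hw', -, hw'v⟩ := h.exists_lt i
  refine h.1 ⟨_, splice_mem_iteratedSumset hP hw hw', fun k ↦ ?_⟩
  rw [splice_apply]
  split_ifs with hk
  exacts [hwv k fun e ↦ hj (e ▸ hk), hw'v k fun e ↦ hk (e ▸ hi)]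

lemma exists_isSocleExponent_of_exchange {N : ℕ} (hN : 0 < N) {P : Set (Fin (N + 1) →₀ ℕ)} {d : ℕ}
    (hdeg : ∀ u ∈ P, u.degree = d)
    (hP : ∀ i : Fin N, ∃ g, g + Finsupp.single i.castSucc 1 ∈ P ∧ g + Finsupp.single i.succ 1 ∈ P) :
    ∃ m, 1 ≤ m ∧ ∃ v, IsSocleExponent (iteratedSumset m P) v := by
  have hstage (j : Fin (N + 1)) : ∃ m, 1 ≤ m ∧
      ∃ v, ∀ t ≤ j, v + Finsupp.single t 1 ∈ iteratedSumset m P := by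
    induction j using Fin.induction with
    | zero =>
      obtain ⟨g, hg, -⟩ := hP ⟨0, hN⟩
      refine ⟨1, le_rfl, g, fun t ht ↦ ?_⟩
      rwa [iteratedSumset_one, Fin.le_zero_iff.mp ht]
    | succ j ih =>
      obtain ⟨m, -, v, hv⟩ := ih
      obtain ⟨g, hg, hg'⟩ := hP j
      refine ⟨m + 1, by omega, v + (g + Finsupp.single j.castSucc 1), fun t ht ↦ ?_⟩
      rcases ht.lt_or_eq with ht | rfl
      · rw [add_right_comm]
        exact add_mem_iteratedSumset_succ (hv t (Fin.le_castSucc_iff.mpr ht)) hg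
      · have hswap : v + (g + Finsupp.single j.castSucc 1) + Finsupp.single j.succ 1 =
            v + Finsupp.single j.castSucc 1 + (g + Finsupp.single j.succ 1) := by abel
        rw [hswap]
        exact add_mem_iteratedSumset_succ (hv _ le_rfl) hg'
  obtain ⟨m, hm, v, hv⟩ := hstage (Fin.last N)
  exact ⟨m, hm, v, isSocleExponent_of_degree_eq
    (fun w hw ↦ map_eq_nsmul_of_mem_iteratedSumset Finsupp.degree hdeg hw)
    fun i ↦ hv i (Fin.le_last i)⟩

end MonomialIdeals

section Paths

variable {ι : Type*} [LinearOrder ι]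

/-- A path `s`, thought of as the sequence of prefix sums of an exponent vector, that stays between
`α` and `β` and whose increments are nonnegative and bounded by those of `C`. -/
structure IsPath (C α β s : ι → ℕ) : Prop where
  monotone : Monotone s
  add_le_add : ∀ ⦃i j⦄, i ≤ j → s j + C i ≤ s i + C j
  lower_le : ∀ i, α i ≤ s i
  le_upper : ∀ i, s i ≤ β i

/-- The largest path that stays below `β` and rises no faster than `C`. -/
def highestPath [LocallyFiniteOrderBot ι] (C β : ι → ℕ) (k : ι) : ℕ :=
  (Finset.Iic k).inf' ⟨k, Finset.mem_Iic.mpr le_rfl⟩ fun j ↦ β j + C k - C j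

/-- The smallest path that stays above `α` and rises no faster than `C`. Truncating the subtraction
is intended: paths are nonnegative. -/
def lowestPath [LocallyFiniteOrderTop ι] (C α : ι → ℕ) (k : ι) : ℕ :=
  (Finset.Ici k).sup fun l ↦ α l + C k - C l

variable {C α β : ι → ℕ}

lemma highestPath_le [LocallyFiniteOrderBot ι] {j k : ι} (hjk : j ≤ k) :
    highestPath C β k ≤ β j + C k - C j :=
  Finset.inf'_le _ (Finset.mem_Iic.mpr hjk)

lemma exists_highestPath_eq [LocallyFiniteOrderBot ι] (C β : ι → ℕ) (k : ι) :
    ∃ j ≤ k, highestPath C β k = β j + C k - C j := by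
  obtain ⟨j, hj, e⟩ := Finset.exists_mem_eq_inf' ⟨k, Finset.mem_Iic.mpr le_rfl⟩
    fun j ↦ β j + C k - C j
  exact ⟨j, Finset.mem_Iic.mp hj, e⟩

lemma le_lowestPath [LocallyFiniteOrderTop ι] {k l : ι} (hkl : k ≤ l) :
    α l + C k - C l ≤ lowestPath C α k :=
  Finset.le_sup (f := fun l ↦ α l + C k - C l) (Finset.mem_Ici.mpr hkl)

lemma exists_lowestPath_eq [LocallyFiniteOrderTop ι] (C α : ι → ℕ) (k : ι) :
    ∃ l ≥ k, lowestPath C α k = α l + C k - C l := by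
  obtain ⟨l, hl, e⟩ := Finset.exists_mem_eq_sup (Finset.Ici k) ⟨k, Finset.mem_Ici.mpr le_rfl⟩
    fun l ↦ α l + C k - C l
  exact ⟨l, Finset.mem_Ici.mp hl, e⟩

lemma isPath_highestPath [LocallyFiniteOrderBot ι] (hC : Monotone C) (hβ : Monotone β)
    (h : ∀ ⦃i j⦄, i ≤ j → α j + C i ≤ β i + C j) : IsPath C α β (highestPath C β) where
  monotone i j hij := by
    obtain ⟨l, hlj, e⟩ := exists_highestPath_eq C β j
    have := hC hij
    rcases le_total l i with hli | hil
    · have := highestPath_le (C := C) (β := β) hli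
      omega
    · have := highestPath_le (C := C) (β := β) (le_refl i)
      have := hβ hil
      have := hC hlj
      omega
  add_le_add i j hij := by
    obtain ⟨l, hli, e⟩ := exists_highestPath_eq C β i
    have := highestPath_le (C := C) (β := β) (hli.trans hij)
    have := hC hli
    have := hC hij
    omega
  lower_le i := by
    obtain ⟨l, hli, e⟩ := exists_highestPath_eq C β i
    have := h hli
    omega
  le_upper i := (highestPath_le le_rfl).trans_eq (Nat.add_sub_cancel _ _)

lemma isPath_lowestPath [LocallyFiniteOrderTop ι] (hC : Monotone C) (hα : Monotone α)
    (h : ∀ ⦃i j⦄, i ≤ j → α j + C i ≤ β i + C j) : IsPath C α β (lowestPath C α) where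
  monotone i j hij := by
    obtain ⟨l, hil, e⟩ := exists_lowestPath_eq C α i
    rcases le_total j l with hjl | hlj
    · have := le_lowestPath (C := C) (α := α) hjl
      have := hC hij
      omega
    · have := le_lowestPath (C := C) (α := α) (le_refl j)
      have := hα hlj
      have := hC hil
      omega
  add_le_add i j hij := by
    obtain ⟨l, hjl, e⟩ := exists_lowestPath_eq C α j
    have := le_lowestPath (C := C) (α := α) (hij.trans hjl)
    have := hC hij
    omega
  lower_le i := (Nat.add_sub_cancel _ _).symm.trans_le (le_lowestPath le_rfl)
  le_upper i := by
    obtain ⟨l, hil, e⟩ := exists_lowestPath_eq C α i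
    have := h hil
    omega

lemma lowestPath_lt_highestPath [LocallyFiniteOrderBot ι] [LocallyFiniteOrderTop ι] {p : ι}
    (hC : Monotone C) (h : ∀ ⦃i j⦄, i ≤ p → p ≤ j → α j + C i < β i + C j) :
    lowestPath C α p < highestPath C β p := by
  obtain ⟨i, hip, ei⟩ := exists_highestPath_eq C β p
  obtain ⟨j, hpj, ej⟩ := exists_lowestPath_eq C α p
  have := h hip le_rfl
  have := h hip hpj
  have := hC hip
  have := hC hpj
  omega

lemma IsPath.glue {F G : ι → ℕ} {p : ι} {q : ι → Prop} [DecidablePred q] (hC : StrictMono C)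
    (hα : Monotone α) (hβ : Monotone β) (hF : IsPath C α β F) (hG : IsPath C α β G)
    (hp : G p < F p) (hq : ∀ k, q k → k ≤ p) (hnq : ∀ k, ¬ q k → p ≤ k) :
    IsPath C α β fun k ↦ if q k then min (F k) (G p) else max (G k) (G p + 1) where
  monotone i j hij := by
    have := hF.monotone hij
    have := hG.monotone hij
    dsimp only
    split_ifs with hi hj hj
    · omega
    · omega
    · obtain rfl := hij.antisymm ((hq j hj).trans (hnq i hi))
      exact absurd hj hi
    · omega
  add_le_add i j hij := by
    have := hF.add_le_add hij
    have := hG.add_le_add hij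
    have := hC.monotone hij
    split_ifs with hj hi hi
    · omega
    · obtain rfl := hij.antisymm ((hq j hj).trans (hnq i hi))
      exact absurd hj hi
    · have := hC (lt_of_le_of_ne hij fun e ↦ hj (e ▸ hi))
      have := hF.add_le_add (hq i hi)
      have := hG.add_le_add (hnq j hj)
      have := hC.monotone (hq i hi)
      have := hC.monotone (hnq j hj)
      omega
    · omega
  lower_le k := by
    have := hF.lower_le k
    have := hG.lower_le k
    split_ifs with hk
    · have := hα (hq k hk)
      have := hG.lower_le p
      omega
    · omega
  le_upper k := by
    have := hF.le_upper k
    have := hG.le_upper k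
    split_ifs with hk
    · omega
    · have := hβ (hnq k hk)
      have := hF.le_upper p
      omega

lemma IsPath.exists_exchange {F G : ι → ℕ} {p : ι} (hC : StrictMono C) (hα : Monotone α)
    (hβ : Monotone β) (hF : IsPath C α β F) (hG : IsPath C α β G) (hp : G p < F p) :
    ∃ t, Monotone t ∧ IsPath C α β (fun k ↦ t k + if p ≤ k then 1 else 0) ∧
      IsPath C α β (fun k ↦ t k + if p < k then 1 else 0) := by
  refine ⟨fun k ↦ if k ≤ p then min (F k) (G p) else max (G k - 1) (G p), fun i j hij ↦ ?_, ?_, ?_⟩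
  · have := hF.monotone hij
    have := hG.monotone hij
    grind
  · convert hF.glue (q := (· < p)) hC hα hβ hG hp (fun _ ↦ le_of_lt) (fun _ ↦ le_of_not_gt) using 2
    grind
  · convert hF.glue (q := (· ≤ p)) hC hα hβ hG hp (fun _ ↦ id) (fun _ ↦ le_of_not_ge) using 2
    grind

end Paths

section PrefixSums

lemma sum_Iic_add_sum_Ioc {ι M : Type*} [LinearOrder ι] [LocallyFiniteOrder ι]
    [LocallyFiniteOrderBot ι] [AddCommMonoid M] (f : ι → M) {i j : ι} (hij : i ≤ j) :
    ∑ l ∈ Finset.Iic i, f l + ∑ l ∈ Finset.Ioc i j, f l = ∑ l ∈ Finset.Iic j, f l := by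
  rw [← Finset.Iic_union_Ioc_eq_Iic hij, Finset.sum_union (Finset.Iic_disjoint_Ioc le_rfl)]

lemma sum_Iic_zero {M : Type*} [AddCommMonoid M] {N : ℕ} (f : Fin (N + 1) → M) :
    ∑ l ∈ Finset.Iic 0, f l = f 0 := by
  rw [← bot_eq_zero, Finset.Iic_bot, Finset.sum_singleton]

lemma sum_Iic_succ {M : Type*} [AddCommMonoid M] {N : ℕ} (f : Fin (N + 1) → M) (k : Fin N) :
    ∑ l ∈ Finset.Iic k.succ, f l = ∑ l ∈ Finset.Iic k.castSucc, f l + f k.succ := by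
  have hIoc : Finset.Ioc k.castSucc k.succ = {k.succ} := by
    ext l
    simp only [Finset.mem_Ioc, Fin.castSucc_lt_iff_succ_le, Finset.mem_singleton]
    exact ⟨fun h ↦ h.2.antisymm h.1, fun h ↦ ⟨h.ge, h.le⟩⟩
  rw [← sum_Iic_add_sum_Ioc f (Fin.castSucc_le_succ k), hIoc, Finset.sum_singleton]

lemma exists_sum_Iic_eq {N : ℕ} {s : Fin (N + 1) → ℕ} (hs : Monotone s) :
    ∃ u : Fin (N + 1) →₀ ℕ, ∀ k, ∑ l ∈ Finset.Iic k, u l = s k := by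
  refine ⟨Finsupp.equivFunOnFinite.symm
    (Fin.cons (s 0) fun k ↦ s k.succ - s k.castSucc), fun k ↦ ?_⟩
  simp only [Finsupp.equivFunOnFinite_symm_apply_apply]
  induction k using Fin.induction with
  | zero => rw [sum_Iic_zero, Fin.cons_zero]
  | succ k ih =>
    rw [sum_Iic_succ, ih, Fin.cons_succ, Nat.add_sub_cancel' (hs (Fin.castSucc_le_succ k))]

lemma sum_Iic_single_one {N : ℕ} (i k : Fin N) :
    ∑ l ∈ Finset.Iic k, Finsupp.single i 1 l = if i ≤ k then 1 else 0 := by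
  simp [Finsupp.single_apply]

end PrefixSums

section PLPIdeals

/-- The exponent vectors of the monomials generating the basic PLP-polymatroidal ideal of type
`(0, b | α, β)`. -/
def plpExponents {n : ℕ} (b α β : Fin n → ℕ) : Set (Fin n →₀ ℕ) :=
  {u | (∀ i, u i ≤ b i) ∧
    ∀ i, α i ≤ ∑ j ∈ Finset.Iic i, u j ∧ ∑ j ∈ Finset.Iic i, u j ≤ β i}

lemma monomialIdeal_plpExponents {R : Type*} [CommSemiring R] {n : ℕ} (b α β : Fin n → ℕ) :
    monomialIdeal R (plpExponents b α β) = Ideal.span {f | ∃ u : Fin n → ℕ, (∀ i, u i ≤ b i) ∧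
        (∀ i, α i ≤ ∑ j ∈ Finset.Iic i, u j ∧ ∑ j ∈ Finset.Iic i, u j ≤ β i) ∧
        f = ∏ i, X i ^ u i} := by
  rw [monomialIdeal]
  congr 1
  ext f
  simp only [plpExponents, Set.mem_image, Set.mem_ofPred_eq, and_assoc, monomial_eq, map_one,
    one_mul, Finsupp.prod_pow, eq_comm (b := f)]
  exact Finsupp.equivFunOnFinite.exists_congr fun _ ↦ Iff.rfl

lemma splice_mem_plpExponents {n : ℕ} {b α β : Fin n → ℕ} {i : Fin n} (hi : β i ≤ α i)
    {u u' : Fin n →₀ ℕ} (hu : u ∈ plpExponents b α β) (hu' : u' ∈ plpExponents b α β) :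
    splice (· ≤ i) u u' ∈ plpExponents b α β := by
  have hle (k) (hk : k ≤ i) :
      ∑ j ∈ Finset.Iic k, splice (· ≤ i) u u' j = ∑ j ∈ Finset.Iic k, u j :=
    Finset.sum_congr rfl fun j hj ↦ by
      rw [splice_apply, if_pos ((Finset.mem_Iic.mp hj).trans hk)]
  have hIoc (k) : ∑ j ∈ Finset.Ioc i k, splice (· ≤ i) u u' j = ∑ j ∈ Finset.Ioc i k, u' j :=
    Finset.sum_congr rfl fun j hj ↦ by
      rw [splice_apply, if_neg (Finset.mem_Ioc.mp hj).1.not_ge]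
  refine ⟨fun k ↦ ?_, fun k ↦ ?_⟩
  · rw [splice_apply]
    split_ifs
    exacts [hu.1 k, hu'.1 k]
  · rcases le_total k i with hki | hik
    · rw [hle k hki]
      exact hu.2 k
    · have hcut : ∑ j ∈ Finset.Iic i, u j = ∑ j ∈ Finset.Iic i, u' j := by
        have := hu.2 i
        have := hu'.2 i
        omega
      rw [← sum_Iic_add_sum_Ioc _ hik, hle i le_rfl, hIoc, hcut, sum_Iic_add_sum_Ioc _ hik]
      exact hu'.2 k

lemma apply_eq_of_mem_plpExponents {n : ℕ} {b α β : Fin n → ℕ} {i j : Fin n} (hij : i < j)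
    (h : β i + ∑ l ∈ Finset.Ioc i j, b l ≤ α j) {u : Fin n →₀ ℕ} (hu : u ∈ plpExponents b α β) :
    u j = b j := by
  refine (hu.1 j).antisymm (not_lt.mp fun hlt ↦ ?_)
  have hsum : ∑ l ∈ Finset.Ioc i j, u l < ∑ l ∈ Finset.Ioc i j, b l :=
    Finset.sum_lt_sum (fun l _ ↦ hu.1 l) ⟨j, Finset.mem_Ioc.mpr ⟨hij, le_rfl⟩, hlt⟩
  have := sum_Iic_add_sum_Ioc u hij.le
  have := hu.2 i
  have := hu.2 j
  omega

variable {N : ℕ} {b α β : Fin (N + 1) → ℕ}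

lemma degree_eq_of_mem_plpExponents (hlast : α (Fin.last N) = β (Fin.last N))
    {u : Fin (N + 1) →₀ ℕ} (hu : u ∈ plpExponents b α β) : u.degree = β (Fin.last N) := by
  have h := hu.2 (Fin.last N)
  rw [← Fin.top_eq_last, Finset.Iic_top] at h
  rw [Finsupp.degree_eq_sum, ← Fin.top_eq_last]
  rw [← Fin.top_eq_last] at hlast
  omega

lemma mem_plpExponents_of_isPath (hβ0 : β 0 = b 0) {u : Fin (N + 1) →₀ ℕ}
    (hu : IsPath (fun k ↦ ∑ l ∈ Finset.Iic k, b l) α β fun k ↦ ∑ l ∈ Finset.Iic k, u l) :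
    u ∈ plpExponents b α β := by
  refine ⟨fun i ↦ ?_, fun i ↦ ⟨hu.lower_le i, hu.le_upper i⟩⟩
  cases i using Fin.cases with
  | zero => simpa only [sum_Iic_zero, hβ0] using hu.le_upper 0
  | succ i =>
    have h := hu.add_le_add (Fin.castSucc_le_succ i)
    simp only [sum_Iic_succ] at h
    omega

lemma exists_exchange_plpExponents (hα : Monotone α) (hβ : Monotone β)
    (hβ0 : β 0 = b 0) (hb : ∀ i, 1 ≤ b i) (hle : α (Fin.last N) ≤ β (Fin.last N))
    (hlt : ∀ ⦃i j⦄, i ≤ j → i ≠ Fin.last N →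
      α j + ∑ l ∈ Finset.Iic i, b l < β i + ∑ l ∈ Finset.Iic j, b l) (i : Fin N) :
    ∃ g, g + Finsupp.single i.castSucc 1 ∈ plpExponents b α β ∧
      g + Finsupp.single i.succ 1 ∈ plpExponents b α β := by
  set C : Fin (N + 1) → ℕ := fun k ↦ ∑ l ∈ Finset.Iic k, b l
  have hC : StrictMono C := Fin.strictMono_iff_lt_succ.mpr fun k ↦
    (Nat.lt_add_of_pos_right (hb _)).trans_eq (sum_Iic_succ b k).symm
  have hweak : ∀ ⦃i j⦄, i ≤ j → α j + C i ≤ β i + C j := fun i j hij ↦ by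
    by_cases hi : i = Fin.last N
    · obtain rfl := hij.antisymm (hi ▸ Fin.le_last j)
      exact Nat.add_le_add_right (hi ▸ hle) _
    · exact (hlt hij hi).le
  have hgap : lowestPath C α i.castSucc < highestPath C β i.castSucc :=
    lowestPath_lt_highestPath hC.monotone fun j k hj hk ↦
      hlt (hj.trans hk) (hj.trans_lt (Fin.castSucc_lt_last i)).ne
  obtain ⟨t, ht, htle, htlt⟩ := (isPath_highestPath hC.monotone hβ hweak).exists_exchange hC hα hβ
    (isPath_lowestPath hC.monotone hα hweak) hgap
  obtain ⟨g, hg⟩ := exists_sum_Iic_eq ht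
  refine ⟨g, mem_plpExponents_of_isPath hβ0 ?_, mem_plpExponents_of_isPath hβ0 ?_⟩
  · simpa only [Finsupp.add_apply, Finset.sum_add_distrib, hg, sum_Iic_single_one] using htle
  · simpa only [Finsupp.add_apply, Finset.sum_add_distrib, hg, sum_Iic_single_one,
      Fin.castSucc_lt_iff_succ_le] using htlt

lemma exists_isSocleExponent_plpExponents (hα : Monotone α) (hβ : Monotone β)
    (hlast : α (Fin.last N) = β (Fin.last N)) (hα0 : α 0 = 0) (hβ0 : β 0 = b 0)
    (hb : ∀ i, 1 ≤ b i)
    (hαβ : ∀ i : Fin (N + 1), 1 ≤ (i : ℕ) → (i : ℕ) + 1 < N + 1 → α i + 1 ≤ β i)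
    (hsum : ∀ i j, i < j → α j < β i + ∑ l ∈ Finset.Ioc i j, b l) :
    ∃ m, 1 ≤ m ∧ ∃ v, IsSocleExponent (iteratedSumset m (plpExponents b α β)) v := by
  have hb0 := hb 0
  have hN : 0 < N := by
    rcases N.eq_zero_or_pos with rfl | hN
    · have : α 0 = β 0 := hlast
      omega
    · exact hN
  have hlt ⦃i j⦄ (hij : i ≤ j) (hi : i ≠ Fin.last N) :
      α j + ∑ l ∈ Finset.Iic i, b l < β i + ∑ l ∈ Finset.Iic j, b l := by
    rcases hij.eq_or_lt with rfl | hij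
    · have : α i < β i := by
        rcases eq_or_ne i 0 with rfl | hi0
        · omega
        · exact hαβ i (Fin.pos_iff_ne_zero.mpr hi0)
            (Nat.succ_lt_succ (Fin.lt_last_iff_ne_last.mpr hi))
      omega
    · have := hsum i j hij
      have := sum_Iic_add_sum_Ioc b hij.le
      omega
  exact exists_isSocleExponent_of_exchange hN (fun _ ↦ degree_eq_of_mem_plpExponents hlast)
    (exists_exchange_plpExponents hα hβ hβ0 hb hlast.le hlt)

end PLPIdeals

section Necessity

variable {n m : ℕ} {b α β : Fin n → ℕ} {v : Fin n →₀ ℕ}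

lemma IsSocleExponent.one_le_of_plpExponents
    (h : IsSocleExponent (iteratedSumset m (plpExponents b α β)) v) (i : Fin n) : 1 ≤ b i := by
  by_contra! hb
  obtain ⟨w, hw, hwi, -⟩ := h.exists_lt i
  have hzero : w i = m • 0 := map_eq_nsmul_of_mem_iteratedSumset (Finsupp.applyAddHom i)
    (fun u hu ↦ Nat.lt_one_iff.mp ((hu.1 i).trans_lt hb)) hw
  rw [smul_zero] at hzero
  omega

lemma IsSocleExponent.lt_of_plpExponents
    (h : IsSocleExponent (iteratedSumset m (plpExponents b α β)) v) {i j : Fin n} (hij : i < j) :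
    α i < β i := by
  by_contra! hβα
  exact h.not_forall_splice_mem (p := (· ≤ i)) le_rfl hij.not_ge
    fun _ hu _ hu' ↦ splice_mem_plpExponents hβα hu hu'

lemma IsSocleExponent.lt_add_sum_of_plpExponents
    (h : IsSocleExponent (iteratedSumset m (plpExponents b α β)) v) {i j : Fin n} (hij : i < j) :
    α j < β i + ∑ l ∈ Finset.Ioc i j, b l := by
  by_contra! hle
  have : Nontrivial (Fin n) := ⟨i, j, hij.ne⟩
  obtain ⟨u, hu, hne⟩ := h.exists_apply_ne j (b j)
  exact hne (apply_eq_of_mem_plpExponents hij hle hu)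

end Necessity

theorem socle_star_nonzero_of_PLP_iff_general
    {R : Type*} [CommSemiring R] [Nontrivial R] {N : ℕ} (b α β : Fin (N + 1) → ℕ)
    (hα : Monotone α) (hβ : Monotone β) (hlast : α (Fin.last N) = β (Fin.last N))
    (hα0 : α 0 = 0) (hβ0 : β 0 = b 0) :
    (∃ m : ℕ, 1 ≤ m ∧
      (monomialIdeal R (plpExponents b α β) ^ m).colon
          (Ideal.span (Set.range X) : Ideal (MvPolynomial (Fin (N + 1)) R)) ≠
        monomialIdeal R (plpExponents b α β) ^ m) ↔
      ((∀ i, 1 ≤ b i) ∧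
       (∀ i : Fin (N + 1), 1 ≤ (i : ℕ) → (i : ℕ) + 1 < N + 1 → α i + 1 ≤ β i) ∧
       (∀ i j, i < j → α j < β i + ∑ l ∈ Finset.Ioc i j, b l)) := by
  simp only [monomialIdeal_pow, colon_monomialIdeal_ne_iff]
  constructor
  · rintro ⟨m, -, v, h⟩
    exact ⟨h.one_le_of_plpExponents,
      fun i _ hi ↦ h.lt_of_plpExponents (j := Fin.last N) (Nat.lt_of_succ_lt_succ hi),
      fun i j ↦ h.lt_add_sum_of_plpExponents⟩
  · rintro ⟨hb, hαβ, hsum⟩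
    exact exists_isSocleExponent_plpExponents hα hβ hlast hα0 hβ0 hb hαβ hsum

/-- For a basic PLP-polymatroidal ideal `I` of type `(0, b | α, β)`,
`Soc*(I) ≠ 0` (i.e. `(Iᵐ : 𝔪) ≠ Iᵐ` for some `m ≥ 1`, equivalently `ℓ(I) = n`) if and
only if `bᵢ ≥ 1` for all `i`, `αᵢ ≤ βᵢ - 1` for `i = 2,…,n-1`, and
`βᵢ + b_{i+1} + ⋯ + b_j > α_j` for all `1 ≤ i < j ≤ n`.
(Indices are 1-based in the paper; below `Fin n` is 0-based.) -/
theorem socle_star_nonzero_of_PLP_iff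
    {K : Type*} [Field K] {n : ℕ} (hn : 0 < n) (d : ℕ) (hd : 1 ≤ d)
    (b α β : Fin n → ℕ)
    (hαmono : Monotone α) (hβmono : Monotone β)
    (hαlast : α ⟨n - 1, by omega⟩ = d) (hβlast : β ⟨n - 1, by omega⟩ = d)
    (hαβ : ∀ i, α i ≤ β i)
    (hα1 : α ⟨0, hn⟩ = 0) (hβ1 : β ⟨0, hn⟩ = b ⟨0, hn⟩)
    (I : Ideal (MvPolynomial (Fin n) K))
    (hI : I = Ideal.span {f | ∃ u : Fin n → ℕ, (∀ i, u i ≤ b i) ∧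
        (∀ i, α i ≤ ∑ j ∈ Finset.Iic i, u j ∧ ∑ j ∈ Finset.Iic i, u j ≤ β i) ∧
        f = ∏ i, X i ^ u i})
    (mI : Ideal (MvPolynomial (Fin n) K)) (hmI : mI = Ideal.span (Set.range X)) :
    (∃ m : ℕ, 1 ≤ m ∧ (I ^ m).colon mI ≠ I ^ m) ↔
      ((∀ i, 1 ≤ b i) ∧
       (∀ i : Fin n, 1 ≤ (i : ℕ) → (i : ℕ) + 1 < n → α i + 1 ≤ β i) ∧
       (∀ i j : Fin n, i < j → α j < β i + ∑ l ∈ Finset.Ioc i j, b l)) := by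
  obtain ⟨N, rfl⟩ := Nat.exists_eq_add_one.mpr hn
  rw [hI, hmI, ← monomialIdeal_plpExponents]
  exact socle_star_nonzero_of_PLP_iff_general b α β hαmono hβmono (hαlast.trans hβlast.symm) hα1 hβ1
end
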